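/- For every positive integer k there exist constants C, D > 0 depending only on k with the following property: let α : G_1 × ⋯ × G_k → 𝔽 be a multilinear form with 𝔼_{x_1,…,x_k} χ(α(x_1,…,x_k)) ≥ c for some c > 0. Then there exist r ≤ C·(log_{|𝔽|}(|𝔽|·c^{-1}))^D, nonempty sets I_1, …, I_r ⊆ [k−1], and multilinear forms β_i : ∏_{j∈I_i} G_j → 𝔽 and γ_i : ∏_{j∈[k]∖I_i} G_j → 𝔽 for i ∈ [r], such that α(x) = Σ_{i∈[r]} β_i(x_{I_i})·γ_i(x_{[k]∖I_i}) for all x ∈ G_1 × ⋯ × G_k. -/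

import Mathlib

namespace PRAR

open MvPolynomial

/-- Directional derivative on polynomials. -/
noncomputable def pd {σ K : Type} [Field K] (w : σ → K) :
    Derivation K (MvPolynomial σ K) (MvPolynomial σ K) :=
  mkDerivation K (fun i => C (w i))

/-- Expansion along a generic line. -/
noncomputable def lineMap {ι K : Type} [Field K] (z : ι → K) (L : ι → MvPolynomial ι K) :
    MvPolynomial ι K →ₐ[K] Polynomial (MvPolynomial ι K) :=
  aeval (fun i => Polynomial.C (C (z i)) + Polynomial.X * Polynomial.C (L i))

lemma lineMap_eval {ι K : Type} [Field K] (z : ι → K) (L : ι → MvPolynomial ι K)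
    (p : MvPolynomial ι K) : (lineMap z L p).eval 0 = C (eval z p) := by
  induction p using MvPolynomial.induction_on with
  | C a => simp [lineMap, IsScalarTower.algebraMap_apply K (MvPolynomial ι K) (Polynomial (MvPolynomial ι K)), MvPolynomial.algebraMap_eq]
  | add p q hp hq => simp [hp, hq]
  | mul_X p i hp =>
    rw [map_mul, Polynomial.eval_mul, hp]
    simp [lineMap]

lemma lineMap_deriv {ι K : Type} [Field K] [Fintype ι] (z : ι → K) (L : ι → MvPolynomial ι K)
    (p : MvPolynomial ι K) : (Polynomial.derivative (lineMap z L p)).eval 0 =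
      ∑ i, C (eval z (pderiv i p)) * L i := by
  classical
  induction p using MvPolynomial.induction_on with
  | C a => simp [lineMap, IsScalarTower.algebraMap_apply K (MvPolynomial ι K) (Polynomial (MvPolynomial ι K)), MvPolynomial.algebraMap_eq]
  | add p q hp hq => simp [hp, hq, add_mul, Finset.sum_add_distrib]
  | mul_X p i hp =>
    rw [map_mul, Polynomial.derivative_mul, Polynomial.eval_add, Polynomial.eval_mul,
      Polynomial.eval_mul, hp, lineMap_eval, lineMap_eval]
    have : ∀ j, C (eval z (pderiv j (p * X i))) * L j =
        C (eval z (pderiv j p)) * L j * C (eval z (X i)) +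
          (if j = i then C (eval z p) * L j else 0) := by
      intro j
      rw [Derivation.leibniz]
      by_cases h : j = i
      · subst h
        simp; ring
      · simp [pderiv_X_of_ne (Ne.symm h), h]; ring
    simp_rw [this, Finset.sum_add_distrib, ← Finset.sum_mul]
    simp [lineMap]

lemma linIndep_aux {ι K : Type} [Field K] [Fintype ι] [DecidableEq ι]
    (f : ι → MvPolynomial ι K) (Z : Finset (ι → K))
    (hZ : ∀ z ∈ Z, (∀ i, eval z (f i) = 0) ∧
      (Matrix.of fun i j => eval z (pderiv j (f i))).det ≠ 0)
    (δ : (ι → K) → MvPolynomial ι K) (hδ1 : ∀ z, eval z (δ z) = 1)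
    (hδ0 : ∀ z z', z ≠ z' → eval z (δ z') = 0) (S : ℕ) :
    LinearIndependent K (fun q : Z × (ι → Fin S) =>
      δ q.1.1 * ∏ i, f i ^ (q.2 i : ℕ)) := by
  classical
  rw [Fintype.linearIndependent_iff]
  intro c hc
  by_contra hcon
  push Not at hcon
  -- choose minimal
  let deg : Z × (ι → Fin S) → ℕ := fun q => ∑ i, (q.2 i : ℕ)
  obtain ⟨q0, hq0, hmin⟩ : ∃ q0, c q0 ≠ 0 ∧ ∀ q, c q ≠ 0 → deg q0 ≤ deg q := by
    obtain ⟨q, hq⟩ := hcon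
    obtain ⟨q0, hq0, h⟩ := Finset.exists_min_image (Finset.univ.filter fun q => c q ≠ 0) deg
      ⟨q, by simpa using hq⟩
    exact ⟨q0, by simpa using hq0, fun q hq => h q (by simpa using hq)⟩
  obtain ⟨⟨z, hz⟩, a0⟩ := q0
  obtain ⟨hf0, hdet⟩ := hZ z hz
  set M : Matrix ι ι K := Matrix.of fun i j => eval z (pderiv j (f i)) with hM
  let L : ι → MvPolynomial ι K := fun i => ∑ j, C (M⁻¹ i j) * X j
  have hg : ∀ i, ∃ g, lineMap z L (f i) = Polynomial.X * g ∧ g.eval 0 = X i := by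
    intro i
    have h0 : (lineMap z L (f i)).coeff 0 = 0 := by
      rw [Polynomial.coeff_zero_eq_eval_zero, lineMap_eval, hf0, map_zero]
    obtain ⟨g, hg⟩ := Polynomial.X_dvd_iff.mpr h0
    refine ⟨g, hg, ?_⟩
    have := lineMap_deriv z L (f i)
    rw [hg] at this
    simp only [Polynomial.derivative_mul, Polynomial.derivative_X, one_mul, Polynomial.eval_add,
      Polynomial.eval_mul, Polynomial.eval_X, zero_mul, add_zero] at this
    rw [this]
    have hMM : M * M⁻¹ = 1 := Matrix.mul_nonsing_inv _ (isUnit_iff_ne_zero.mpr hdet)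
    calc ∑ j, C (eval z (pderiv j (f i))) * L j
        = ∑ l, C ((M * M⁻¹) i l) * X l := by
          simp only [L, Matrix.mul_apply, map_sum, Finset.sum_mul, Finset.mul_sum]
          rw [Finset.sum_comm]
          refine Finset.sum_congr rfl fun l _ => Finset.sum_congr rfl fun j _ => ?_
          rw [C_mul, mul_assoc]; rfl
      _ = X i := by rw [hMM]; simp [Matrix.one_apply]
  choose g hg hg0 using hg
  set n := deg (⟨z, hz⟩, a0) with hn
  have h1 : ∀ q : Z × (ι → Fin S), lineMap z L (c q • (δ q.1.1 * ∏ i, f i ^ (q.2 i : ℕ))) =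
      Polynomial.X ^ n * (c q • (lineMap z L (δ q.1.1) * Polynomial.X ^ (deg q - n) *
        ∏ i, g i ^ (q.2 i : ℕ))) := by
    intro q
    by_cases hq : c q = 0
    · simp [hq]
    have hle := hmin q hq
    rw [map_smul, map_mul, map_prod]
    simp_rw [map_pow, hg, mul_pow, Finset.prod_mul_distrib, Finset.prod_pow_eq_pow_sum]
    have : (Polynomial.X : Polynomial (MvPolynomial ι K)) ^ (∑ i, (q.2 i : ℕ)) =
        Polynomial.X ^ n * Polynomial.X ^ (deg q - n) := by
      rw [← pow_add, Nat.add_sub_cancel' hle]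
    rw [this, mul_smul_comm, mul_assoc (Polynomial.X ^ n), mul_left_comm, mul_assoc (lineMap z L (δ q.1.1))]
  have h2 := congrArg (lineMap z L) hc
  rw [map_sum, map_zero] at h2
  simp_rw [h1] at h2
  rw [← Finset.mul_sum] at h2
  have h3 := (mul_eq_zero.mp h2).resolve_left (pow_ne_zero _ Polynomial.X_ne_zero)
  have h4 := congrArg (Polynomial.eval 0) h3
  rw [Polynomial.eval_finset_sum] at h4
  have h5 := congrArg (coeff (Finsupp.equivFunOnFinite.symm fun i => (a0 i : ℕ))) h4
  rw [coeff_sum] at h5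
  rw [Finset.sum_eq_single (⟨z, hz⟩, a0)] at h5
  · rw [← hn] at h5
    simp only [Polynomial.eval_smul, Polynomial.eval_mul, lineMap_eval, hδ1, Nat.sub_self,
      Polynomial.eval_prod, Polynomial.eval_pow, hg0, pow_zero, Polynomial.eval_one, map_one,
      one_mul, Polynomial.eval_zero, coeff_zero, coeff_smul, smul_eq_mul] at h5
    have : (∏ i, (X i : MvPolynomial ι K) ^ (a0 i : ℕ)) =
        monomial (Finsupp.equivFunOnFinite.symm fun i => (a0 i : ℕ)) 1 := by
      rw [monomial_eq, Finsupp.prod_fintype _ _ (by simp)]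
      simp
    rw [this, coeff_monomial] at h5
    simp at h5
    exact hq0 h5
  · rintro ⟨⟨z', hz'⟩, a⟩ - hne
    by_cases hzz : z = z'
    · subst hzz
      simp only [Polynomial.eval_smul, Polynomial.eval_mul, lineMap_eval, hδ1,
        Polynomial.eval_prod, Polynomial.eval_pow, hg0, map_one,
        one_mul, coeff_smul, smul_eq_mul, Polynomial.eval_X]
      have : (∏ i, (X i : MvPolynomial ι K) ^ (a i : ℕ)) =
          monomial (Finsupp.equivFunOnFinite.symm fun i => (a i : ℕ)) 1 := by
        rw [monomial_eq, Finsupp.prod_fintype _ _ (by simp)]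
        simp
      rw [this]
      have hane : a ≠ a0 := fun h => hne (by rw [h])
      rcases Nat.eq_zero_or_pos (deg (⟨z, hz'⟩, a) - n) with h | h
      · rw [h, pow_zero, one_mul, coeff_monomial, if_neg, mul_zero]
        intro h
        apply hane
        funext i
        have := DFunLike.congr_fun h i
        simp at this
        exact Fin.ext this
      · rw [zero_pow h.ne']; simp
    · simp [lineMap_eval, hδ0 z z' hzz]
  · simp

lemma count_nonsing {ι K : Type} [Field K] [Fintype K] [Fintype ι] [DecidableEq ι]
    (f : ι → MvPolynomial ι K) (d : ℕ) (hd : ∀ i, (f i).totalDegree ≤ d) (Z : Finset (ι → K))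
    (hZ : ∀ z ∈ Z, (∀ i, eval z (f i) = 0) ∧
      (Matrix.of fun i j => eval z (pderiv j (f i))).det ≠ 0) :
    Z.card ≤ (d * Fintype.card ι + 1) ^ Fintype.card ι := by
  classical
  obtain ⟨D0, hD0⟩ : ∃ D0, ∀ z : ι → K, (indicator z).totalDegree ≤ D0 :=
    ⟨Finset.univ.sup fun z : ι → K => (indicator z).totalDegree,
      fun z => Finset.le_sup (f := fun z : ι → K => (indicator z).totalDegree) (Finset.mem_univ z)⟩
  set j := Fintype.card ι
  let S := D0 + 1
  have hli := linIndep_aux f Z hZ (fun z => indicator z) eval_indicator_apply_eq_one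
    (fun z z' h => eval_indicator_apply_eq_zero z z' h) S
  let N := D0 + j * (d * S)
  have hmem : ∀ q : Z × (ι → Fin S),
      indicator q.1.1 * ∏ i, f i ^ (q.2 i : ℕ) ∈ restrictDegree ι K N := by
    intro q
    apply restrictTotalDegree_le_restrictDegree
    rw [mem_restrictTotalDegree]
    refine (totalDegree_mul _ _).trans (add_le_add (hD0 _) ?_)
    refine (totalDegree_finsetProd _ _).trans ?_
    calc ∑ i, (f i ^ (q.2 i : ℕ)).totalDegree ≤ ∑ i : ι, d * S := by
          refine Finset.sum_le_sum fun i _ => (totalDegree_pow _ _).trans ?_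
          rw [mul_comm]
          exact Nat.mul_le_mul (hd i) (q.2 i).2.le
      _ = j * (d * S) := by simp [j]
  let v : Z × (ι → Fin S) → restrictDegree ι K N := fun q => ⟨_, hmem q⟩
  have hli' : LinearIndependent K v := by
    apply LinearIndependent.of_comp (restrictDegree ι K N).subtype
    exact hli
  have h1 := hli'.fintype_card_le_finrank
  have h2 : Module.finrank K (restrictDegree ι K N) ≤ (N + 1) ^ j := by
    have hb : Module.finrank K (restrictDegree ι K N) = _ :=
      Module.finrank_eq_nat_card_basis (basisRestrictSupport K {n : ι →₀ ℕ | ∀ i, n i ≤ N})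
    rw [hb]
    let emb : {n : ι →₀ ℕ | ∀ i, n i ≤ N} → (ι → Fin (N + 1)) :=
      fun n i => ⟨n.1 i, Nat.lt_succ_of_le (n.2 i)⟩
    have hinj : Function.Injective emb := by
      intro a b hab
      apply Subtype.ext
      ext i
      have := congrFun hab i
      simpa [emb] using this
    have := Nat.card_le_card_of_injective emb hinj
    simpa [j] using this
  have h3 : Fintype.card (Z × (ι → Fin S)) = Z.card * S ^ j := by
    simp [j]
  rw [h3] at h1
  have h4 : (N + 1) ^ j ≤ (d * j + 1) ^ j * S ^ j := by
    rw [← mul_pow]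
    apply Nat.pow_le_pow_left
    simp only [N, S]
    nlinarith
  exact Nat.le_of_mul_le_mul_right (h1.trans (h2.trans h4)) (by positivity)

end PRAR


namespace PRAR

open MvPolynomial

lemma totalDegree_aeval_le {σ ι K : Type} [Field K] (g : σ → MvPolynomial ι K)
    (hg : ∀ i, (g i).totalDegree ≤ 1) (p : MvPolynomial σ K) :
    (aeval g p).totalDegree ≤ p.totalDegree := by
  rw [aeval_def, eval₂_eq]
  apply totalDegree_finsetSum_le
  intro m hm
  refine (totalDegree_mul _ _).trans ?_
  rw [MvPolynomial.algebraMap_eq, totalDegree_C, zero_add]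
  refine (totalDegree_finsetProd _ _).trans ?_
  refine le_trans ?_ (le_totalDegree hm)
  rw [Finsupp.sum]
  apply Finset.sum_le_sum
  intro i _
  refine (totalDegree_pow _ _).trans ?_
  nlinarith [hg i]

lemma totalDegree_pd_le {σ K : Type} [Field K] (w : σ → K) (p : MvPolynomial σ K) :
    (pd w p).totalDegree ≤ p.totalDegree := by
  classical
  conv_lhs => rw [p.as_sum]
  rw [map_sum]
  apply totalDegree_finsetSum_le
  intro m hm
  refine le_trans ?_ (le_totalDegree hm)
  rw [pd, mkDerivation_monomial]
  refine (totalDegree_smul_le _ _).trans ?_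
  rw [Finsupp.sum]
  apply totalDegree_finsetSum_le
  intro i hi
  rw [smul_eq_mul]
  refine (totalDegree_mul _ _).trans ?_
  rw [totalDegree_C, add_zero]
  refine (totalDegree_monomial_le _ _).trans ?_
  exact Finsupp.degree_mono (tsub_le_self)

lemma totalDegree_det_le {σ K ι : Type} [Field K] [Fintype ι] [DecidableEq ι]
    (M : Matrix ι ι (MvPolynomial σ K)) (d : ℕ) (hM : ∀ i j, (M i j).totalDegree ≤ d) :
    M.det.totalDegree ≤ Fintype.card ι * d := by
  rw [Matrix.det_apply]
  apply totalDegree_finsetSum_le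
  intro s _
  have : (Equiv.Perm.sign s • ∏ i, M (s i) i).totalDegree ≤ (∏ i, M (s i) i).totalDegree := by
    rcases Int.units_eq_one_or (Equiv.Perm.sign s) with h | h <;> rw [h] <;> simp [Units.smul_def]
  refine this.trans ((totalDegree_finsetProd _ _).trans ?_)
  refine (Finset.sum_le_sum (fun i _ => hM (s i) i)).trans ?_
  simp

lemma totalDegree_adjugate_le {σ K ι : Type} [Field K] [Fintype ι] [DecidableEq ι]
    (M : Matrix ι ι (MvPolynomial σ K)) (d : ℕ) (hM : ∀ i j, (M i j).totalDegree ≤ d) (i j : ι) :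
    (M.adjugate i j).totalDegree ≤ Fintype.card ι * d := by
  rw [Matrix.adjugate_apply]
  apply totalDegree_det_le
  intro i' j'
  rw [Matrix.updateRow_apply]
  split_ifs
  · rw [Pi.single_apply]; split_ifs <;> simp
  · exact hM _ _

/-- restriction of a polynomial to an affine subspace -/
noncomputable def res {σ ι K : Type} [Field K] [Fintype ι] (x : σ → K) (e : ι → σ → K) :
    MvPolynomial σ K →ₐ[K] MvPolynomial ι K :=
  aeval (fun s => C (x s) + ∑ j, C (e j s) * X j)

lemma res_eval {σ ι K : Type} [Field K] [Fintype ι] (x : σ → K) (e : ι → σ → K) (u : ι → K)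
    (p : MvPolynomial σ K) : eval u (res x e p) = eval (x + ∑ j, u j • e j) p := by
  induction p using MvPolynomial.induction_on with
  | C a => simp [res]
  | add p q hp hq => simp [hp, hq]
  | mul_X p i hp =>
    rw [map_mul, map_mul, hp, map_mul]
    congr 1
    simp [res, mul_comm]

lemma res_pderiv {σ ι K : Type} [Field K] [Fintype ι] (x : σ → K) (e : ι → σ → K) 
    (p : MvPolynomial σ K) (j : ι) : pderiv j (res x e p) = res x e (pd (e j) p) := by
  classical
  induction p using MvPolynomial.induction_on with
  | C a => simp [res, pd, MvPolynomial.algebraMap_eq]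
  | add p q hp hq => simp [hp, hq]
  | mul_X p i hp =>
    rw [map_mul, Derivation.leibniz, Derivation.leibniz, hp, map_add, smul_eq_mul, smul_eq_mul, smul_eq_mul, smul_eq_mul, map_mul, map_mul]
    congr 1
    congr 1
    simp [res, pd, mkDerivation_X, pderiv_C, Derivation.leibniz, pderiv_X, Pi.single_apply, MvPolynomial.algebraMap_eq]

lemma totalDegree_res_le {σ ι K : Type} [Field K] [Fintype ι] (x : σ → K) (e : ι → σ → K)
    (p : MvPolynomial σ K) : (res x e p).totalDegree ≤ p.totalDegree := by
  apply totalDegree_aeval_le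
  intro i
  refine (totalDegree_add _ _).trans (max_le (by simp) ?_)
  apply totalDegree_finsetSum_le
  intro j _
  refine (totalDegree_mul _ _).trans ?_
  simp

lemma count_dir {σ ι K : Type} [Field K] [Fintype K] [Fintype σ] [Fintype ι] [DecidableEq ι]
    (f : ι → MvPolynomial σ K) (e : ι → σ → K) (d : ℕ) (hd : ∀ i, (f i).totalDegree ≤ d)
    (Y : Finset (σ → K))
    (hY : ∀ x ∈ Y, (∀ i, eval x (f i) = 0) ∧
      (Matrix.of fun i j => eval x (pd (e j) (f i))).det ≠ 0) :
    Y.card * Fintype.card K ^ Fintype.card ι ≤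
      Fintype.card K ^ Fintype.card σ * (d * Fintype.card ι + 1) ^ Fintype.card ι := by
  classical
  have h1 : ∀ x : σ → K, (Finset.univ.filter fun u : ι → K => x + ∑ j, u j • e j ∈ Y).card ≤
      (d * Fintype.card ι + 1) ^ Fintype.card ι := by
    intro x
    apply count_nonsing (fun i => res x e (f i)) d
    · intro i
      exact (totalDegree_res_le _ _ _).trans (hd i)
    · intro z hz
      rw [Finset.mem_filter] at hz
      obtain ⟨a, b⟩ := hY _ hz.2
      refine ⟨fun i => by rw [res_eval]; exact a i, ?_⟩
      simpa only [res_pderiv, res_eval] using b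
  have h2 : ∀ u : ι → K, (Finset.univ.filter fun x : σ → K => x + ∑ j, u j • e j ∈ Y).card = Y.card := by
    intro u
    apply Finset.card_bij (fun x _ => x + ∑ j, u j • e j)
    · intro x hx; exact (Finset.mem_filter.1 hx).2
    · intro x _ y _ h; exact add_right_cancel h
    · intro y hy
      exact ⟨y - ∑ j, u j • e j, by simp [hy], by simp⟩
  have h3 := Finset.sum_card_bipartiteAbove_eq_sum_card_bipartiteBelow (s := (Finset.univ : Finset (σ → K)))
    (t := (Finset.univ : Finset (ι → K))) (fun x u => x + ∑ j, u j • e j ∈ Y)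
  simp only [Finset.bipartiteAbove, Finset.bipartiteBelow, h2] at h3
  have h4 := Finset.sum_le_sum (s := (Finset.univ : Finset (σ → K))) (fun x _ => h1 x)
  rw [h3] at h4
  simp only [Finset.sum_const, Finset.card_univ, smul_eq_mul, Fintype.card_fun] at h4
  rw [mul_comm]; exact h4

end PRAR


namespace PRAR

open MvPolynomial

lemma half_nonzero {A K : Type} [AddCommGroup A] [Fintype A] [AddCommGroup K] [DecidableEq K]
    (φ : A → K) (hφ : ∀ a b, φ (a + b) = φ a + φ b) (a₀ : A) (h : φ a₀ ≠ 0) :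
    Fintype.card A ≤ 2 * (Finset.univ.filter fun a => φ a ≠ 0).card := by
  have h1 : (Finset.univ.filter fun a => φ a = 0).card ≤ (Finset.univ.filter fun a => φ a ≠ 0).card := by
    apply Finset.card_le_card_of_injOn (fun a => a + a₀)
    · intro a ha
      simp only [Finset.coe_filter, Finset.mem_univ, true_and, Set.mem_ofPred_eq] at ha ⊢
      rw [hφ, ha, zero_add]; exact h
    · intro a _ b _ hab; exact add_right_cancel hab
  have h2 := Finset.card_filter_add_card_filter_not (s := (Finset.univ : Finset A)) (fun a => φ a = 0)
  rw [Finset.card_univ] at h2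
  simp only [ne_eq] at *
  omega

lemma quarter_nonzero {A B K : Type} [AddCommGroup A] [Fintype A] [AddCommGroup B] [Fintype B]
    [AddCommGroup K] [DecidableEq K]
    (φ : A → B → K) (h1 : ∀ a b c, φ (a + b) c = φ a c + φ b c)
    (h2 : ∀ a b c, φ a (b + c) = φ a b + φ a c) (a₀ : A) (b₀ : B) (h : φ a₀ b₀ ≠ 0) :
    Fintype.card A * Fintype.card B ≤
      4 * (Finset.univ.filter fun p : A × B => φ p.1 p.2 ≠ 0).card := by
  classical
  have e1 := half_nonzero (fun a => φ a b₀) (fun a b => h1 a b b₀) a₀ h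
  have e2 : (Finset.univ.filter fun p : A × B => φ p.1 p.2 ≠ 0).card =
      ∑ a : A, (Finset.univ.filter fun b : B => φ a b ≠ 0).card := by
    simp only [Finset.card_filter, Fintype.sum_prod_type]
  have e3 : ∑ a ∈ (Finset.univ.filter fun a => φ a b₀ ≠ 0), Fintype.card B ≤
      2 * ∑ a : A, (Finset.univ.filter fun b : B => φ a b ≠ 0).card := by
    rw [Finset.mul_sum]
    refine le_trans (Finset.sum_le_sum ?_) (Finset.sum_le_sum_of_subset (Finset.filter_subset _ _))
    intro a ha
    exact half_nonzero (φ a) (h2 a) b₀ (Finset.mem_filter.1 ha).2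
  rw [Finset.sum_const, smul_eq_mul, ← e2] at e3
  calc _ ≤ 2 * (Finset.univ.filter fun a => φ a b₀ ≠ 0).card * Fintype.card B :=
        Nat.mul_le_mul_right _ e1
    _ ≤ _ := by linarith

lemma pd_add {σ K : Type} [Field K] (v w : σ → K) (p : MvPolynomial σ K) :
    pd (v + w) p = pd v p + pd w p := by
  have : pd (v + w) = pd v + pd w := by
    apply MvPolynomial.derivation_ext
    intro i; simp [pd, mkDerivation_X]
  rw [this]; rfl

lemma pd_smul {σ K : Type} [Field K] (k : K) (w : σ → K) (p : MvPolynomial σ K) :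
    pd (k • w) p = k • pd w p := by
  have : pd (k • w) = k • pd w := by
    apply MvPolynomial.derivation_ext
    intro i; simp [pd, mkDerivation_X, smul_eq_C_mul]
  rw [this]; rfl

/-- One elimination stage. -/
structure Stage (σ K : Type) [Field K] where
  τ : Type
  inst : Fintype τ
  a : MvPolynomial σ K
  c : τ → (σ → K) → MvPolynomial σ K
  c_add : ∀ j v w, c j (v + w) = c j v + c j w
  c_smul : ∀ j (k : K) w, c j (k • w) = k • c j w
  e : τ → σ → K

attribute [instance] Stage.inst

/-- The modified derivation of a stage. -/
noncomputable def Stage.D {σ K : Type} [Field K] (S : Stage σ K) (w : σ → K) :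
    Derivation K (MvPolynomial σ K) (MvPolynomial σ K) :=
  S.a • pd w + ∑ j, S.c j w • pd (S.e j)

lemma Stage.D_apply {σ K : Type} [Field K] (S : Stage σ K) (w : σ → K) (g : MvPolynomial σ K) :
    S.D w g = S.a * pd w g + ∑ j, S.c j w * pd (S.e j) g := by
  have h : ∀ t : Finset S.τ, (∑ j ∈ t, S.c j w • pd (S.e j)) g = ∑ j ∈ t, S.c j w * pd (S.e j) g := by
    classical
    intro t
    induction t using Finset.induction_on with
    | empty => simp
    | insert j t hj ih => rw [Finset.sum_insert hj, Finset.sum_insert hj, ← ih]; rfl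
  rw [← h]; rfl

lemma Stage.D_add {σ K : Type} [Field K] (S : Stage σ K) (v w : σ → K) (g : MvPolynomial σ K) :
    S.D (v + w) g = S.D v g + S.D w g := by
  simp only [Stage.D_apply, pd_add, S.c_add, mul_add, add_mul, Finset.sum_add_distrib]
  abel

lemma Stage.D_smul {σ K : Type} [Field K] (S : Stage σ K) (k : K) (w : σ → K)
    (g : MvPolynomial σ K) :
    S.D (k • w) g = k • S.D w g := by
  simp only [Stage.D_apply, pd_smul, S.c_smul, smul_add, Finset.smul_sum, mul_smul_comm,
    smul_mul_assoc]

/-- The stage given by a family of polynomials and directions. -/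
noncomputable def mkStage {σ K ι : Type} [Field K] [Fintype ι] [DecidableEq ι]
    (f : ι → MvPolynomial σ K) (e : ι → σ → K) : Stage σ K where
  τ := ι
  inst := inferInstance
  a := (Matrix.of fun i j => pd (e j) (f i)).det
  c := fun j w => - ∑ i, (Matrix.of fun i j => pd (e j) (f i)).adjugate j i * pd w (f i)
  c_add := by
    intro j v w
    simp only [pd_add, mul_add, Finset.sum_add_distrib, neg_add]
  c_smul := by
    intro j k w
    simp only [pd_smul, mul_smul_comm, ← Finset.smul_sum, smul_neg]
  e := e

/-- matrix of derivatives evaluated at a point -/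
noncomputable def jac {σ K ι : Type} [Field K] (f : ι → MvPolynomial σ K) (e : ι → σ → K)
    (x : σ → K) : Matrix ι ι K := Matrix.of fun i j => eval x (pd (e j) (f i))

lemma jac_eq {σ K ι : Type} [Field K] [Fintype ι] [DecidableEq ι] (f : ι → MvPolynomial σ K)
    (e : ι → σ → K) (x : σ → K) :
    jac f e x = (eval x).mapMatrix (Matrix.of fun i j => pd (e j) (f i)) := by
  ext i j; simp [jac]

lemma eval_mkStage_a {σ K ι : Type} [Field K] [Fintype ι] [DecidableEq ι]
    (f : ι → MvPolynomial σ K) (e : ι → σ → K) (x : σ → K) :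
    eval x (mkStage f e).a = (jac f e x).det := by
  rw [jac_eq, ← RingHom.map_det]; rfl

lemma eval_mkStage_D {σ K ι : Type} [Field K] [Fintype ι] [DecidableEq ι]
    (f : ι → MvPolynomial σ K) (e : ι → σ → K) (x : σ → K) (hx : (jac f e x).det ≠ 0)
    (w : σ → K) (g : MvPolynomial σ K) :
    eval x ((mkStage f e).D w g) =
      (jac (Sum.elim f (fun _ : Unit => g)) (Sum.elim e (fun _ => w)) x).det := by
  have hu : IsUnit (jac f e x).det := isUnit_iff_ne_zero.2 hx
  let _ : Invertible (jac f e x) := Matrix.invertibleOfIsUnitDet _ hu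
  have hb : jac (Sum.elim f (fun _ : Unit => g)) (Sum.elim e (fun _ => w)) x =
      Matrix.fromBlocks (jac f e x) (Matrix.of fun i (_ : Unit) => eval x (pd w (f i)))
        (Matrix.of fun (_ : Unit) j => eval x (pd (e j) g))
        (Matrix.of fun (_ _ : Unit) => eval x (pd w g)) := by
    ext i j
    rcases i with i | i <;> rcases j with j | j <;> rfl
  rw [hb, Matrix.det_fromBlocks₁₁, Stage.D_apply, map_add, map_mul, eval_mkStage_a]
  have hadj : ∀ j i : ι, eval x ((Matrix.of fun i j : ι => pd (e j) (f i)).adjugate j i) =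
      (jac f e x).adjugate j i := by
    intro j i
    rw [jac_eq, ← RingHom.map_adjugate]; rfl
  have hc : ∀ j : ι, eval x ((mkStage f e).c j w) =
      - ∑ i, (jac f e x).adjugate j i * eval x (pd w (f i)) := by
    intro j
    simp only [mkStage, map_neg, map_sum, map_mul]
    congr 1
    exact Finset.sum_congr rfl (fun i _ => by rw [hadj])
  have hs : eval x (∑ j, (mkStage f e).c j w * pd ((mkStage f e).e j) g) =
     ∑ j : ι, (- ∑ i, (jac f e x).adjugate j i * eval x (pd w (f i))) * eval x (pd (e j) g) := by
    rw [map_sum]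
    refine Finset.sum_congr rfl (fun j _ => ?_)
    rw [map_mul]; exact congrArg₂ _ (hc j) rfl
  rw [hs, Matrix.det_unique (n := Unit), Matrix.sub_apply, mul_sub]
  have h3 : (jac f e x).det • ⅟(jac f e x) = (jac f e x).adjugate := by
    rw [Matrix.invOf_eq_nonsing_inv, Matrix.inv_def, smul_smul, Ring.mul_inverse_cancel _ hu, one_smul]
  rw [sub_eq_add_neg]
  congr 1
  rw [Matrix.mul_assoc, Matrix.mul_apply, Finset.mul_sum, ← Finset.sum_neg_distrib]
  refine Finset.sum_congr rfl (fun j _ => ?_)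
  rw [← h3, Matrix.mul_apply]
  simp only [Matrix.smul_apply, smul_eq_mul, Matrix.of_apply, mul_assoc, ← Finset.mul_sum]
  ring

end PRAR


namespace PRAR

open MvPolynomial

lemma totalDegree_mkStage_D_le {σ K ι : Type} [Field K] [Fintype ι] [DecidableEq ι]
    (f : ι → MvPolynomial σ K) (e : ι → σ → K) (d : ℕ) (hd : ∀ i, (f i).totalDegree ≤ d)
    (g : MvPolynomial σ K) (hg : g.totalDegree ≤ d) (w : σ → K) :
    ((mkStage f e).D w g).totalDegree ≤ (Fintype.card ι + 2) * d := by
  have hp : ∀ v (p : MvPolynomial σ K), p.totalDegree ≤ d → (pd v p).totalDegree ≤ d :=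
    fun v p h => (totalDegree_pd_le v p).trans h
  have ha : (mkStage f e).a.totalDegree ≤ Fintype.card ι * d :=
    totalDegree_det_le _ d (fun i j => hp _ _ (hd i))
  have hc : ∀ j : ι, ((mkStage f e).c j w).totalDegree ≤ Fintype.card ι * d + d := by
    intro j
    simp only [mkStage, totalDegree_neg]
    apply totalDegree_finsetSum_le
    intro i _
    exact (totalDegree_mul _ _).trans (add_le_add
      (totalDegree_adjugate_le _ d (fun i j => hp _ _ (hd i)) _ _) (hp _ _ (hd i)))
  rw [Stage.D_apply]
  have e1 := hp w g hg
  refine (totalDegree_add _ _).trans (max_le ?_ ?_)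
  · refine (totalDegree_mul _ _).trans ?_
    nlinarith
  · apply totalDegree_finsetSum_le
    intro j _
    refine (totalDegree_mul _ _).trans ?_
    have := hc j
    have := hp ((mkStage f e).e j) g hg
    nlinarith

/-- State of the greedy procedure. -/
def GreedyAt {σ K : Type} [Field K] (X : Finset (σ → K)) (E : Submodule K (MvPolynomial σ K))
    (j : ℕ) : Prop :=
  ∃ (ι : Type) (_ : Fintype ι) (_ : DecidableEq ι) (f : ι → MvPolynomial σ K) (e : ι → σ → K)
    (Y : Finset (σ → K)), Fintype.card ι = j ∧ (∀ i, f i ∈ E) ∧ Y ⊆ X ∧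
    (∀ x ∈ Y, (jac f e x).det ≠ 0) ∧ X.card ≤ 8 ^ j * Y.card

/-- The greedy procedure stops. -/
def GreedyStop {σ K : Type} [Field K] (X : Finset (σ → K)) (E : Submodule K (MvPolynomial σ K))
    (j : ℕ) : Prop :=
  ∃ (ι : Type) (_ : Fintype ι) (_ : DecidableEq ι) (f : ι → MvPolynomial σ K) (e : ι → σ → K)
    (Y : Finset (σ → K)), Fintype.card ι = j ∧ (∀ i, f i ∈ E) ∧ Y ⊆ X ∧
    (∀ x ∈ Y, (jac f e x).det ≠ 0) ∧ X.card ≤ 8 ^ (j + 1) * Y.card ∧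
    ∀ x ∈ Y, ∀ g ∈ E, ∀ w, eval x ((mkStage f e).D w g) = 0

lemma greedy_step {σ K : Type} [Field K] [Fintype K] [Fintype σ] (X : Finset (σ → K))
    (E : Submodule K (MvPolynomial σ K)) [Finite E] (j : ℕ) (h : GreedyAt X E j) :
    GreedyStop X E j ∨ GreedyAt X E (j + 1) := by
  classical
  obtain ⟨ι, i1, i2, f, e, Y, hj, hf, hYX, hdet, hcard⟩ := h
  let bad : (σ → K) → Prop := fun x => ∃ g ∈ E, ∃ w, eval x ((mkStage f e).D w g) ≠ 0
  have hsplit := Finset.card_filter_add_card_filter_not (s := Y) bad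
  by_cases hcase : Y.card ≤ 2 * (Y.filter fun x => ¬ bad x).card
  · left
    refine ⟨ι, i1, i2, f, e, Y.filter fun x => ¬ bad x, hj, hf, (Finset.filter_subset _ _).trans hYX,
      fun x hx => hdet x (Finset.mem_filter.1 hx).1, ?_, ?_⟩
    · calc X.card ≤ 8 ^ j * Y.card := hcard
        _ ≤ 8 ^ j * (8 * (Y.filter fun x => ¬ bad x).card) := by gcongr; omega
        _ = _ := by ring
    · intro x hx g hg w
      by_contra hne
      exact (Finset.mem_filter.1 hx).2 ⟨g, hg, w, hne⟩
  · right
    have hY1 : Y.card ≤ 2 * (Y.filter bad).card := by omega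
    set Y1 := Y.filter bad with hY1def
    let _ : Fintype E := Fintype.ofFinite E
    have hq : ∀ x ∈ Y1, Fintype.card E * Fintype.card (σ → K) ≤ 4 *
        (Finset.univ.filter fun p : E × (σ → K) =>
          eval x ((mkStage f e).D p.2 p.1.1) ≠ 0).card := by
      intro x hx
      obtain ⟨g, hg, w, hne⟩ := (Finset.mem_filter.1 hx).2
      exact quarter_nonzero (fun (g : E) (w : σ → K) => eval x ((mkStage f e).D w g.1))
        (by intro a b c; simp) (by intro a b c; simp [Stage.D_add]) ⟨g, hg⟩ w hne
    have hdc := Finset.sum_card_bipartiteAbove_eq_sum_card_bipartiteBelow (s := Y1)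
      (t := (Finset.univ : Finset (E × (σ → K))))
      (fun x p => eval x ((mkStage f e).D p.2 p.1.1) ≠ 0)
    simp only [Finset.bipartiteAbove, Finset.bipartiteBelow] at hdc
    have hex : ∃ p : E × (σ → K), Y1.card ≤
        4 * (Y1.filter fun x => eval x ((mkStage f e).D p.2 p.1.1) ≠ 0).card := by
      by_contra hno
      push Not at hno
      have l1 : Y1.card * (Fintype.card E * Fintype.card (σ → K)) ≤
          4 * ∑ x ∈ Y1, (Finset.univ.filter fun p : E × (σ → K) =>
          eval x ((mkStage f e).D p.2 p.1.1) ≠ 0).card := by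
        rw [Finset.mul_sum, ← smul_eq_mul, ← Finset.sum_const]
        exact Finset.sum_le_sum hq
      rw [hdc, Finset.mul_sum] at l1
      have l2 := Finset.sum_lt_sum_of_nonempty (s := (Finset.univ : Finset (E × (σ → K))))
        Finset.univ_nonempty (fun p _ => hno p)
      rw [Finset.sum_const, Finset.card_univ, Fintype.card_prod, smul_eq_mul] at l2
      rw [mul_comm] at l2
      omega
    obtain ⟨⟨g, w⟩, hgw⟩ := hex
    refine ⟨ι ⊕ Unit, inferInstance, inferInstance, Sum.elim f (fun _ => g.1), Sum.elim e (fun _ => w),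
      Y1.filter fun x => eval x ((mkStage f e).D w g.1) ≠ 0, by simp [hj], ?_, ?_, ?_, ?_⟩
    · rintro (i | i)
      · exact hf i
      · exact g.2
    · exact (Finset.filter_subset _ _).trans ((Finset.filter_subset _ _).trans hYX)
    · intro x hx
      rw [Finset.mem_filter] at hx
      rw [← eval_mkStage_D f e x (hdet x (Finset.mem_filter.1 hx.1).1)]
      exact hx.2
    · simp only at hgw
      calc X.card ≤ 8 ^ j * Y.card := hcard
        _ ≤ 8 ^ j * (8 * (Y1.filter fun x => eval x ((mkStage f e).D w g.1) ≠ 0).card) := by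
          gcongr; omega
        _ = _ := by ring

lemma greedy_all {σ K : Type} [Field K] [Fintype K] [Fintype σ] (X : Finset (σ → K))
    (E : Submodule K (MvPolynomial σ K)) [Finite E] (j : ℕ) :
    (∃ i < j, GreedyStop X E i) ∨ GreedyAt X E j := by
  induction j with
  | zero =>
    right
    exact ⟨Empty, inferInstance, inferInstance, Empty.elim, Empty.elim, X, by simp, by simp,
      subset_rfl, by simp, by simp⟩
  | succ j ih =>
    rcases ih with ⟨i, hi, h⟩ | h
    · exact Or.inl ⟨i, by omega, h⟩
    · rcases greedy_step X E j h with h | h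
      · exact Or.inl ⟨j, by omega, h⟩
      · exact Or.inr h

lemma greedy {σ K : Type} [Field K] [Fintype K] [Fintype σ] (X : Finset (σ → K))
    (E : Submodule K (MvPolynomial σ K)) [Finite E] (d L : ℕ)
    (hE : ∀ g ∈ E, ∀ x ∈ X, eval x g = 0) (hdeg : ∀ g ∈ E, g.totalDegree ≤ d)
    (hX : Fintype.card K ^ Fintype.card σ ≤ X.card * Fintype.card K ^ L)
    (hQ : (8 * (d * (2 * L + 1) + 1)) ^ 2 ≤ Fintype.card K) :
    ∃ (S : Stage σ K) (X' : Finset (σ → K)), X' ⊆ X ∧ Fintype.card S.τ ≤ 2 * L ∧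
      Fintype.card K ^ Fintype.card σ ≤ X'.card * Fintype.card K ^ (2 * L + 1) ∧
      (∀ x ∈ X', eval x S.a ≠ 0) ∧ (∀ x ∈ X', ∀ g ∈ E, ∀ w, eval x (S.D w g) = 0) ∧
      ∀ g ∈ E, ∀ w, (S.D w g).totalDegree ≤ (2 * L + 2) * d := by
  have h2 : 2 ≤ Fintype.card K := Fintype.one_lt_card
  set Q := Fintype.card K with hQdef
  set n := Fintype.card σ
  have hQn : 0 < Q ^ n := by positivity
  rcases greedy_all X E (2 * L + 1) with ⟨j, hj, h⟩ | h
  · obtain ⟨ι, i1, i2, f, e, Y, hcj, hf, hYX, hdet, hcard, hz⟩ := h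
    refine ⟨mkStage f e, Y, hYX, ?_, ?_, ?_, hz, ?_⟩
    · change Fintype.card ι ≤ 2 * L
      omega
    · have h8 : 8 ^ 2 ≤ Q := le_trans (Nat.pow_le_pow_left (by nlinarith [Nat.zero_le (d * (2 * L + 1))]) 2) hQ
      calc Q ^ n ≤ X.card * Q ^ L := hX
        _ ≤ (8 ^ (j + 1) * Y.card) * Q ^ L := by gcongr
        _ ≤ (8 ^ (2 * (L + 1)) * Y.card) * Q ^ L := by
          gcongr
          · norm_num
          · omega
        _ = ((8 ^ 2) ^ (L + 1) * Y.card) * Q ^ L := by rw [pow_mul]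
        _ ≤ (Q ^ (L + 1) * Y.card) * Q ^ L := by gcongr
        _ = _ := by ring
    · intro x hx
      rw [eval_mkStage_a]; exact hdet x hx
    · intro g hg w
      refine (totalDegree_mkStage_D_le f e d (fun i => hdeg _ (hf i)) g (hdeg g hg) w).trans ?_
      gcongr
      omega
  · exfalso
    obtain ⟨ι, i1, i2, f, e, Y, hcj, hf, hYX, hdet, hcard⟩ := h
    have hc := count_dir f e d (fun i => hdeg _ (hf i)) Y
      (fun x hx => ⟨fun i => hE _ (hf i) x (hYX hx), hdet x hx⟩)
    rw [hcj] at hc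
    set j := 2 * L + 1 with hjdef
    have k1 : Q ^ n * Q ^ j ≤ Q ^ n * ((8 * (d * j + 1)) ^ j * Q ^ L) := by
      calc Q ^ n * Q ^ j ≤ (X.card * Q ^ L) * Q ^ j := by gcongr
        _ ≤ ((8 ^ j * Y.card) * Q ^ L) * Q ^ j := by gcongr
        _ = 8 ^ j * Q ^ L * (Y.card * Q ^ j) := by ring
        _ ≤ 8 ^ j * Q ^ L * (Q ^ n * (d * j + 1) ^ j) := by gcongr
        _ = _ := by rw [mul_pow]; ring
    have k2 := Nat.le_of_mul_le_mul_left k1 hQn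
    have k3 : Q ^ (2 * j) ≤ Q ^ (j + 2 * L) := by
      calc Q ^ (2 * j) = (Q ^ j) ^ 2 := by rw [← pow_mul, mul_comm]
        _ ≤ ((8 * (d * j + 1)) ^ j * Q ^ L) ^ 2 := by gcongr
        _ = ((8 * (d * j + 1)) ^ 2) ^ j * Q ^ (2 * L) := by rw [mul_pow, ← pow_mul, ← pow_mul, ← pow_mul]; ring
        _ ≤ Q ^ j * Q ^ (2 * L) := by gcongr
        _ = _ := (pow_add _ _ _).symm
    have k4 := (Nat.pow_le_pow_iff_right (by omega)).1 k3
    omega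

end PRAR


namespace PRAR

open MvPolynomial

/-- Embedding of the `t`-th block of a vector. -/
noncomputable def emb {s : ℕ} {B : Fin (s + 1) → Type} {K : Type} [Field K] (t : ℕ)
    (v : ∀ i, B i → K) : (Sigma B) → K := fun p => if p.1.val = t then v p.1 p.2 else 0

/-- Iterated modified derivatives. -/
noncomputable def op {s : ℕ} {B : Fin (s + 1) → Type} {K : Type} [Field K] :
    ℕ → List (Stage (Sigma B) K) → (∀ i, B i → K) → MvPolynomial (Sigma B) K →
      MvPolynomial (Sigma B) K
  | _, [], _, g => g
  | t, S :: l, v, g => op (t + 1) l v (S.D (emb t v) g)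

lemma iterate {s : ℕ} {B : Fin (s + 1) → Type} [∀ i, Fintype (B i)] {K : Type} [Field K]
    [Fintype K] (N m : ℕ) : ∀ (t : ℕ) (X : Finset (Sigma B → K))
    (E : Submodule K (MvPolynomial (Sigma B) K)) (_ : Finite E) (d L : ℕ)
    (_ : ∀ g ∈ E, ∀ x ∈ X, eval x g = 0) (_ : ∀ g ∈ E, g.totalDegree ≤ d)
    (_ : Fintype.card K ^ Fintype.card (Sigma B) ≤ X.card * Fintype.card K ^ L)
    (_ : N = 2 ^ m * (2 * (L + 1)))
    (_ : (8 * (d * N ^ (m + 1) + 1)) ^ 2 ≤ Fintype.card K),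
    ∃ (l : List (Stage (Sigma B) K)) (x : Sigma B → K), x ∈ X ∧ l.length = m ∧
      (∀ S ∈ l, Fintype.card S.τ ≤ N ∧ eval x S.a ≠ 0) ∧
      ∀ g ∈ E, ∀ v, eval x (op t l v g) = 0 := by
  induction m with
  | zero =>
    intro t X E hfin d L hE hdeg hX hN hQ
    have hne : X.Nonempty := by
      rw [← Finset.card_pos]
      by_contra h0
      have : X.card = 0 := by omega
      rw [this, zero_mul] at hX
      have : 0 < Fintype.card K ^ Fintype.card (Sigma B) := by
        have : 0 < Fintype.card K := Fintype.card_pos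
        positivity
      omega
    obtain ⟨x, hx⟩ := hne
    exact ⟨[], x, hx, rfl, by simp, fun g hg v => hE g hg x hx⟩
  | succ m ih =>
    intro t X E hfin d L hE hdeg hX hN hQ
    have hNge : 2 * L + 2 ≤ N := by
      rw [hN]; nlinarith [Nat.one_le_two_pow (n := m + 1)]
    obtain ⟨S, X', hX', hτ, hsize, ha, hz, hdeg'⟩ := greedy X E d L hE hdeg hX (by
      refine le_trans ?_ hQ
      gcongr
      calc 2 * L + 1 ≤ N := by omega
        _ ≤ N ^ (m + 1 + 1) := Nat.le_self_pow (by omega) N)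
    let T : Set (MvPolynomial (Sigma B) K) :=
      Set.range (fun p : E × (Sigma B → K) => S.D p.2 p.1.1)
    have hTfin : T.Finite := Set.finite_range _
    have hfin' : Finite (Submodule.span K T) := by
      have : Module.Finite K (Submodule.span K T) := Module.Finite.span_of_finite K hTfin
      exact Module.finite_of_finite K
    obtain ⟨l, x, hx, hl, hS, hop⟩ := ih (t + 1) X' (Submodule.span K T) hfin' ((2 * L + 2) * d)
      (2 * L + 1) (by
        intro g hg x hx
        induction hg using Submodule.span_induction with
        | mem g hg =>
          obtain ⟨p, rfl⟩ := hg
          exact hz x hx _ p.1.2 _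
        | zero => simp
        | add a b _ _ h1 h2 => rw [map_add, h1, h2, add_zero]
        | smul k a _ h => rw [smul_eval, h, mul_zero]) (by
        intro g hg
        induction hg using Submodule.span_induction with
        | mem g hg =>
          obtain ⟨p, rfl⟩ := hg
          exact hdeg' _ p.1.2 _
        | zero => simp
        | add a b _ _ h1 h2 => exact (totalDegree_add _ _).trans (max_le h1 h2)
        | smul k a _ h => exact (totalDegree_smul_le _ _).trans h) hsize (by rw [hN]; ring) (by
        refine le_trans ?_ hQ
        have hh : (2 * L + 2) * d * N ^ (m + 1) ≤ d * N ^ (m + 1 + 1) := by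
          calc (2 * L + 2) * d * N ^ (m + 1) ≤ N * d * N ^ (m + 1) := by gcongr
            _ = d * N ^ (m + 1 + 1) := by ring
        exact Nat.pow_le_pow_left (Nat.mul_le_mul_left 8 (Nat.succ_le_succ hh)) 2)
    refine ⟨S :: l, x, hX' hx, by simp [hl], ?_, ?_⟩
    · intro S' hS'
      rcases List.mem_cons.1 hS' with rfl | h
      · exact ⟨by omega, ha x hx⟩
      · exact hS S' h
    · intro g hg v
      exact hop _ (Submodule.subset_span ⟨(⟨g, hg⟩, emb t v), rfl⟩) v

end PRAR


namespace PRAR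

open MvPolynomial

/-- Multilinear in the coordinates in `I`, independent of the other coordinates. -/
def ML (K : Type) [Field K] {n : ℕ} {V : Fin n → Type} [∀ i, AddCommGroup (V i)]
    [∀ i, Module K (V i)] {M : Type} [AddCommGroup M] [Module K M]
    (I : Finset (Fin n)) (Φ : (∀ i, V i) → M) : Prop :=
  (∀ i ∈ I, ∀ v a b, Φ (Function.update v i (a + b)) =
    Φ (Function.update v i a) + Φ (Function.update v i b)) ∧
  (∀ i ∈ I, ∀ v (k : K) a, Φ (Function.update v i (k • a)) = k • Φ (Function.update v i a)) ∧
  (∀ i ∉ I, ∀ v a, Φ (Function.update v i a) = Φ v)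

section
variable {K : Type} [Field K] {n : ℕ} {V : Fin n → Type} [∀ i, AddCommGroup (V i)]
    [∀ i, Module K (V i)] {M : Type} [AddCommGroup M] [Module K M]
    {M₂ : Type} [AddCommGroup M₂] [Module K M₂] {M₃ : Type} [AddCommGroup M₃] [Module K M₃]

lemma ML.comp {I : Finset (Fin n)} {Φ : (∀ i, V i) → M} (h : ML K I Φ) (f : M →ₗ[K] M₂) :
    ML K I (fun v => f (Φ v)) := by
  refine ⟨fun i hi v a b => ?_, fun i hi v k a => ?_, fun i hi v a => ?_⟩
  · beta_reduce
    rw [h.1 i hi, map_add]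
  · beta_reduce
    rw [h.2.1 i hi, map_smul]
  · beta_reduce
    rw [h.2.2 i hi]

lemma ML.bil {I J : Finset (Fin n)} {Φ : (∀ i, V i) → M} {Ψ : (∀ i, V i) → M₂} (h : ML K I Φ)
    (h' : ML K J Ψ) (hd : Disjoint I J) (f : M →ₗ[K] M₂ →ₗ[K] M₃) :
    ML K (I ∪ J) (fun v => f (Φ v) (Ψ v)) := by
  have hd' : ∀ i, i ∈ I → i ∉ J := fun i hi hj => Finset.disjoint_left.1 hd hi hj
  refine ⟨fun i hi v a b => ?_, fun i hi v k a => ?_, fun i hi v a => ?_⟩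
  · beta_reduce
    by_cases hI : i ∈ I
    · rw [h.1 i hI, h'.2.2 i (hd' i hI), h'.2.2 i (hd' i hI), h'.2.2 i (hd' i hI)]
      simp
    · have hJ : i ∈ J := (Finset.mem_union.1 hi).resolve_left hI
      rw [h'.1 i hJ, h.2.2 i hI, h.2.2 i hI, h.2.2 i hI]
      simp
  · beta_reduce
    by_cases hI : i ∈ I
    · rw [h.2.1 i hI, h'.2.2 i (hd' i hI), h'.2.2 i (hd' i hI)]
      simp
    · have hJ : i ∈ J := (Finset.mem_union.1 hi).resolve_left hI
      rw [h'.2.1 i hJ, h.2.2 i hI, h.2.2 i hI]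
      simp
  · rw [Finset.mem_union, not_or] at hi
    beta_reduce
    rw [h.2.2 i hi.1, h'.2.2 i hi.2]

lemma ML.coord (i : Fin n) : ML K {i} (fun v : ∀ i, V i => v i) := by
  refine ⟨fun j hj v a b => ?_, fun j hj v k a => ?_, fun j hj v a => ?_⟩
  · rw [Finset.mem_singleton] at hj; subst hj; simp
  · rw [Finset.mem_singleton] at hj; subst hj; simp
  · rw [Finset.mem_singleton] at hj
    exact Function.update_of_ne (Ne.symm hj) _ _

end

/-- Decompositions of partition rank type. -/
def Dec {s : ℕ} (K : Type) [Field K] {V : Fin (s + 1) → Type} [∀ i, AddCommGroup (V i)]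
    [∀ i, Module K (V i)] (r : ℕ) (Φ : (∀ i, V i) → K) : Prop :=
  ∃ (τ : Type) (_ : Fintype τ) (I : τ → Finset (Fin (s + 1))) (β γ : τ → (∀ i, V i) → K),
    Fintype.card τ ≤ r ∧ (∀ i, (I i).Nonempty ∧ Fin.last s ∉ I i ∧ ML K (I i) (β i) ∧
      ML K (I i)ᶜ (γ i)) ∧ ∀ v, Φ v = ∑ i, β i v * γ i v

section
variable {s : ℕ} {K : Type} [Field K] {V : Fin (s + 1) → Type} [∀ i, AddCommGroup (V i)]
    [∀ i, Module K (V i)]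

lemma Dec.mono {r r' : ℕ} {Φ : (∀ i, V i) → K} (h : Dec K r Φ) (hr : r ≤ r') : Dec K r' Φ := by
  obtain ⟨τ, i, I, β, γ, h1, h2⟩ := h
  exact ⟨τ, i, I, β, γ, h1.trans hr, h2⟩

lemma Dec.congr {r : ℕ} {Φ Ψ : (∀ i, V i) → K} (h : Dec K r Φ) (hr : ∀ v, Ψ v = Φ v) :
    Dec K r Ψ := by
  have : Ψ = Φ := funext hr
  rw [this]; exact h

lemma Dec.zero : Dec K 0 (fun _ : (∀ i, V i) => (0 : K)) :=
  ⟨Empty, inferInstance, Empty.elim, Empty.elim, Empty.elim, by simp, by simp, by simp⟩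

lemma Dec.add {r r' : ℕ} {Φ Ψ : (∀ i, V i) → K} (h : Dec K r Φ) (h' : Dec K r' Ψ) :
    Dec K (r + r') (fun v => Φ v + Ψ v) := by
  obtain ⟨τ, i, I, β, γ, h1, h2, h3⟩ := h
  obtain ⟨τ', i', I', β', γ', h1', h2', h3'⟩ := h'
  refine ⟨τ ⊕ τ', inferInstance, Sum.elim I I', Sum.elim β β', Sum.elim γ γ', ?_, ?_, ?_⟩
  · rw [Fintype.card_sum]; omega
  · rintro (i | i)
    · exact h2 i
    · exact h2' i
  · intro v
    simp [h3, h3']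

lemma Dec.sum {r : ℕ} {τ : Type} (t : Finset τ) (Φ : τ → (∀ i, V i) → K)
    (h : ∀ j, Dec K r (Φ j)) : Dec K (t.card * r) (fun v => ∑ j ∈ t, Φ j v) := by
  classical
  induction t using Finset.induction_on with
  | empty => simpa using Dec.zero
  | insert j t hj ih =>
    rw [Finset.card_insert_of_notMem hj]
    exact (((h j).add ih).mono (by rw [add_mul]; omega)).congr
      (fun v => Finset.sum_insert hj)

lemma Dec.smul {r : ℕ} {Φ : (∀ i, V i) → K} (k : K) (h : Dec K r Φ) :
    Dec K r (fun v => k * Φ v) := by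
  obtain ⟨τ, i, I, β, γ, h1, h2, h3⟩ := h
  refine ⟨τ, i, I, fun i v => k * β i v, γ, h1, ?_, ?_⟩
  · intro i
    obtain ⟨a, b, c, d⟩ := h2 i
    exact ⟨a, b, c.comp (LinearMap.mulLeft K k), d⟩
  · intro v
    beta_reduce
    rw [h3, Finset.mul_sum]
    exact Finset.sum_congr rfl (fun i _ => (mul_assoc _ _ _).symm)

lemma Dec.single {I J : Finset (Fin (s + 1))} {β γ : (∀ i, V i) → K} (h : ML K I β)
    (h' : ML K J γ) (hd : Disjoint I J) (hu : I ∪ J = Finset.univ) (hne : I.Nonempty)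
    (hl : Fin.last s ∉ I) : Dec K 1 (fun v => β v * γ v) := by
  have hJ : J = Iᶜ := by
    symm
    apply compl_unique
    · exact Finset.disjoint_iff_inter_eq_empty.1 hd
    · exact hu
  subst hJ
  exact ⟨Unit, inferInstance, fun _ => I, fun _ => β, fun _ => γ, by simp,
    fun _ => ⟨hne, hl, h, h'⟩, by simp⟩

end

/-- active index set -/
def act (s t : ℕ) : Finset (Fin (s + 1)) :=
  Finset.univ.filter fun i => i.val < t ∨ i = Fin.last s

section
variable {s : ℕ} {B : Fin (s + 1) → Type} {K : Type} [Field K]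

/-- emb as linear map -/
noncomputable def embL (t : Fin (s + 1)) : (B t → K) →ₗ[K] (Sigma B → K) :=
  LinearMap.pi (fun p => if h : p.1 = t then LinearMap.proj (h ▸ p.2) else 0)

lemma embL_eq (t : Fin (s + 1)) (v : ∀ i, B i → K) : emb t.val v = embL t (v t) := by
  funext p
  obtain ⟨i, b⟩ := p
  by_cases h : i = t
  · subst h; simp [emb, embL]
  · have : i.val ≠ t.val := fun h' => h (Fin.ext h')
    simp [emb, embL, h, this]

lemma ML_emb (t : Fin (s + 1)) : ML K {t} (fun v : ∀ i, B i → K => emb (K := K) t.val v) := by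
  simp_rw [embL_eq]
  exact (ML.coord (K := K) (V := fun i => B i → K) t).comp (embL t)

/-- D as a bilinear map -/
noncomputable def DL (S : Stage (Sigma B) K) : (Sigma B → K) →ₗ[K] MvPolynomial (Sigma B) K →ₗ[K]
    MvPolynomial (Sigma B) K :=
  LinearMap.mk₂ K (fun w g => S.D w g) (fun a b g => S.D_add a b g) (fun k a g => S.D_smul k a g)
    (fun _ _ _ => map_add _ _ _) (fun _ _ _ => Derivation.map_smul _ _ _)

/-- pd as a bilinear map -/
noncomputable def pdL : (Sigma B → K) →ₗ[K] MvPolynomial (Sigma B) K →ₗ[K]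
    MvPolynomial (Sigma B) K :=
  LinearMap.mk₂ K (fun w g => pd w g) (fun a b g => pd_add a b g) (fun k a g => pd_smul k a g)
    (fun _ _ _ => map_add _ _ _) (fun _ _ _ => Derivation.map_smul _ _ _)

lemma ML.D (S : Stage (Sigma B) K) (t : Fin (s + 1)) {I : Finset (Fin (s + 1))}
    {h : (∀ i, B i → K) → MvPolynomial (Sigma B) K} (hh : ML K I h) (ht : t ∉ I) :
    ML K (insert t I) (fun v => S.D (emb t.val v) (h v)) := by
  have := (ML_emb (B := B) (K := K) t).bil hh (by simpa using ht) (DL S)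
  exact this

lemma ML.pd (t : Fin (s + 1)) {I : Finset (Fin (s + 1))}
    {h : (∀ i, B i → K) → MvPolynomial (Sigma B) K} (hh : ML K I h) (ht : t ∉ I) :
    ML K (insert t I) (fun v => PRAR.pd (emb t.val v) (h v)) := by
  have := (ML_emb (B := B) (K := K) t).bil hh (by simpa using ht) pdL
  exact this

lemma ML.c (S : Stage (Sigma B) K) (t : Fin (s + 1)) (j : S.τ) :
    ML K {t} (fun v : ∀ i, B i → K => S.c j (emb t.val v)) := by
  have := (ML_emb (B := B) (K := K) t).comp (⟨⟨S.c j, S.c_add j⟩, S.c_smul j⟩ :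
    (Sigma B → K) →ₗ[K] MvPolynomial (Sigma B) K)
  exact this

lemma op_add (t : ℕ) (l : List (Stage (Sigma B) K)) (v : ∀ i, B i → K)
    (g h : MvPolynomial (Sigma B) K) : op t l v (g + h) = op t l v g + op t l v h := by
  induction l generalizing t g h with
  | nil => rfl
  | cons S l ih => simp only [op, map_add, ih]

lemma op_zero (t : ℕ) (l : List (Stage (Sigma B) K)) (v : ∀ i, B i → K) :
    op t l v (0 : MvPolynomial (Sigma B) K) = 0 := by
  have := op_add t l v 0 0
  simpa using this

lemma op_sum {τ : Type} (u : Finset τ) (t : ℕ) (l : List (Stage (Sigma B) K)) (v : ∀ i, B i → K)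
    (g : τ → MvPolynomial (Sigma B) K) :
    op t l v (∑ j ∈ u, g j) = ∑ j ∈ u, op t l v (g j) := by
  classical
  induction u using Finset.induction_on with
  | empty => simp [op_zero]
  | insert j u hj ih => rw [Finset.sum_insert hj, Finset.sum_insert hj, op_add, ih]

lemma act_succ (t : Fin (s + 1)) : act s (t.val + 1) = insert t (act s t.val) := by
  ext i
  simp only [act, Finset.mem_filter, Finset.mem_univ, true_and, Finset.mem_insert, Fin.ext_iff]
  omega

lemma notMem_act {t : ℕ} (ht : t < s) : (⟨t, by omega⟩ : Fin (s + 1)) ∉ act s t := by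
  simp [act, Fin.ext_iff]
  omega

lemma act_full : act s s = Finset.univ := by
  ext i
  simp only [act, Finset.mem_filter, Finset.mem_univ, true_and, Fin.ext_iff, Fin.val_last, iff_true]
  omega

lemma dec_prod (x : Sigma B → K) (l : List (Stage (Sigma B) K)) : ∀ (t : ℕ) (_ : t + l.length = s)
    (I J : Finset (Fin (s + 1))) (g h : (∀ i, B i → K) → MvPolynomial (Sigma B) K)
    (_ : ML K I g) (_ : ML K J h) (_ : Disjoint I J) (_ : I ∪ J = act s t) (_ : I.Nonempty)
    (_ : Fin.last s ∉ I),
    Dec K (2 ^ l.length) (fun v => eval x (op t l v (g v * h v))) := by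
  induction l with
  | nil =>
    intro t ht I J g h hg hh hd hu hne hl
    have : t = s := by simpa using ht
    subst this
    rw [act_full] at hu
    have evl : ∀ {I : Finset (Fin (t + 1))} {g : (∀ i, B i → K) → MvPolynomial (Sigma B) K},
        ML K I g → ML K I (fun v => eval x (g v)) := by
      intro I g hg
      have := hg.comp (aeval (R := K) x).toLinearMap
      simpa [aeval_eq_eval] using this
    exact (Dec.single (evl hg) (evl hh) hd hu hne hl).congr (fun v => by simp [op])
  | cons S l ih =>
    intro t ht I J g h hg hh hd hu hne hl
    rw [List.length_cons] at ht
    have hts : t < s := by omega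
    have hna := notMem_act hts
    set t' : Fin (s + 1) := ⟨t, by omega⟩ with ht'
    rw [← hu, Finset.mem_union, not_or] at hna
    have hlast : Fin.last s ≠ t' := by simp [ht', Fin.ext_iff]; omega
    have hact : act s (t + 1) = insert t' (act s t) := act_succ t'
    have d1 := ih (t + 1) (by omega) I (insert t' J) g (fun v => S.D (emb t v) (h v)) hg
      (hh.D S t' hna.2) (by
        rw [Finset.disjoint_insert_right]; exact ⟨hna.1, hd⟩) (by
        rw [Finset.union_insert, hu, hact]) hne hl
    have d2 := ih (t + 1) (by omega) (insert t' I) J (fun v => S.D (emb t v) (g v)) h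
      (hg.D S t' hna.1) hh (by
        rw [Finset.disjoint_insert_left]; exact ⟨hna.2, hd⟩) (by
        rw [Finset.insert_union, hu, hact]) (Finset.insert_nonempty _ _) (by
        rw [Finset.mem_insert, not_or]; exact ⟨hlast, hl⟩)
    refine ((d1.add d2).mono (by rw [List.length_cons, pow_succ]; omega)).congr (fun v => ?_)
    simp only [op]
    rw [Derivation.leibniz, op_add, map_add, smul_eq_mul, smul_eq_mul, mul_comm (h v)]

lemma dec_const (x : Sigma B → K) (l : List (Stage (Sigma B) K)) : ∀ (t : ℕ) (_ : t + l.length = s)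
    (a : MvPolynomial (Sigma B) K) (h : (∀ i, B i → K) → MvPolynomial (Sigma B) K)
    (_ : ML K (act s t) h),
    Dec K (2 ^ l.length) (fun v => eval x (op t l v (a * h v)) -
      eval x a * eval x (op t l v (h v))) := by
  induction l with
  | nil =>
    intro t ht a h hh
    exact (Dec.zero.mono (by simp)).congr (fun v => by simp [op])
  | cons S l ih =>
    intro t ht a h hh
    rw [List.length_cons] at ht
    have hts : t < s := by omega
    have hna := notMem_act hts
    set t' : Fin (s + 1) := ⟨t, by omega⟩ with ht'
    have hact : act s (t + 1) = insert t' (act s t) := act_succ t'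
    have hlast : Fin.last s ≠ t' := by simp [ht', Fin.ext_iff]; omega
    have d1 := ih (t + 1) (by omega) a (fun v => S.D (emb t v) (h v)) (by
      rw [hact]; exact hh.D S t' hna)
    have hconst : ML K ∅ (fun _ : ∀ i, B i → K => a) := ⟨by simp, by simp, by simp⟩
    have d2 := dec_prod x l (t + 1) (by omega) {t'} (act s t) (fun v => S.D (emb t v) a) h
      (hconst.D S t' (by simp)) hh (by simpa using hna) (by rw [hact]; rfl) (by simp)
      (by simpa using hlast)
    refine ((d1.add d2).mono (by rw [List.length_cons, pow_succ]; omega)).congr (fun v => ?_)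
    simp only [op]
    rw [Derivation.leibniz, op_add, map_add, smul_eq_mul, smul_eq_mul, mul_comm (h v)]
    ring

/-- iterated plain derivatives -/
noncomputable def dd : ℕ → ℕ → (∀ i, B i → K) → MvPolynomial (Sigma B) K → MvPolynomial (Sigma B) K
  | _, 0, _, g => g
  | t, m + 1, v, g => dd (t + 1) m v (pd (emb t v) g)

lemma dec_main (R : ℕ) (x : Sigma B → K) (l : List (Stage (Sigma B) K))
    (hR : ∀ S ∈ l, Fintype.card S.τ ≤ R) : ∀ (t : ℕ) (_ : t + l.length = s)
    (h : (∀ i, B i → K) → MvPolynomial (Sigma B) K) (_ : ML K (act s t) h),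
    Dec K (l.length * (2 ^ l.length * (R + 1))) (fun v => eval x (op t l v (h v)) -
      (l.map (fun S => eval x S.a)).prod * eval x (dd t l.length v (h v))) := by
  induction l with
  | nil =>
    intro t ht h hh
    exact (Dec.zero.mono (by simp)).congr (fun v => by simp [op, dd])
  | cons S l ih =>
    intro t ht h hh
    rw [List.length_cons] at ht
    have hts : t < s := by omega
    have hna := notMem_act hts
    set t' : Fin (s + 1) := ⟨t, by omega⟩ with ht'
    have hact : act s (t + 1) = insert t' (act s t) := act_succ t'
    have hlast : Fin.last s ≠ t' := by simp [ht', Fin.ext_iff]; omega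
    have hh' : ML K (act s (t + 1)) (fun v => pd (emb t v) (h v)) := by
      rw [hact]; exact hh.pd t' hna
    have d1 := dec_const x l (t + 1) (by omega) S.a _ hh'
    have d2 := Dec.sum Finset.univ (fun (j : S.τ) (v : ∀ i, B i → K) =>
      eval x (op (t + 1) l v (S.c j (emb t v) * pd (S.e j) (h v)))) (fun j =>
      dec_prod x l (t + 1) (by omega) {t'} (act s t) (fun v => S.c j (emb t v))
        (fun v => pd (S.e j) (h v)) (ML.c S t' j)
        (hh.comp (pd (S.e j)).toLinearMap) (by simpa using hna) (by rw [hact]; rfl) (by simp)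
        (by simpa using hlast))
    have d3 := (ih (fun S' h' => hR S' (List.mem_cons_of_mem _ h')) (t + 1) (by omega) _ hh').smul
      (eval x S.a)
    refine (((d1.add d2).add d3).mono ?_).congr (fun v => ?_)
    · have hS := hR S List.mem_cons_self
      rw [Finset.card_univ, List.length_cons, pow_succ]
      have : Fintype.card S.τ * 2 ^ l.length ≤ R * 2 ^ l.length := Nat.mul_le_mul_right _ hS
      nlinarith [Nat.zero_le ((l.length + 1) * (2 ^ l.length * (R + 1)))]
    · simp only [op, List.length_cons, dd, List.map_cons, List.prod_cons]
      rw [Stage.D_apply, op_add, op_sum, map_add, map_sum]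
      ring

end

end PRAR


namespace PRAR

open MvPolynomial

section
variable {s : ℕ} {B : Fin (s + 1) → Type} [∀ i, Fintype (B i)] {K : Type} [Field K]

/-- The multilinear form with coefficients `a`. -/
noncomputable def Tf (a : (∀ i, B i) → K) (v : ∀ i, B i → K) : K := ∑ j, a j * ∏ i, v i (j i)

/-- The partially substituted form. -/
noncomputable def hp (a : (∀ i, B i) → K) (t : ℕ) (v : ∀ i, B i → K) : MvPolynomial (Sigma B) K :=
  ∑ j, C (a j) * ∏ i, (if i ∈ act s t then C (v i (j i)) else X ⟨i, j i⟩)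

/-- The form as a linear function of the last vector. -/
noncomputable def lin0 (a : (∀ i, B i) → K) : (B (Fin.last s) → K) →ₗ[K] MvPolynomial (Sigma B) K :=
  ∑ j, (LinearMap.toSpanSingleton K _ (C (a j) * ∏ i ∈ Finset.univ.erase (Fin.last s), X ⟨i, j i⟩)) ∘ₗ
    (LinearMap.proj (j (Fin.last s)))

lemma lin0_apply (a : (∀ i, B i) → K) (z : B (Fin.last s) → K) : lin0 a z =
    ∑ j : (∀ i, B i), z (j (Fin.last s)) •
      (C (a j) * ∏ i ∈ Finset.univ.erase (Fin.last s), X ⟨i, j i⟩) := by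
  simp [lin0, LinearMap.sum_apply, LinearMap.toSpanSingleton_apply]

lemma hp_zero (a : (∀ i, B i) → K) (v : ∀ i, B i → K) : hp a 0 v = lin0 a (v (Fin.last s)) := by
  rw [lin0_apply, hp]
  refine Finset.sum_congr rfl (fun j _ => ?_)
  rw [← Finset.mul_prod_erase _ _ (Finset.mem_univ (Fin.last s)), if_pos (by simp [act]),
    smul_eq_C_mul]
  rw [Finset.prod_congr rfl (g := fun i => (X ⟨i, j i⟩ : MvPolynomial (Sigma B) K))]
  · ring
  · intro i hi
    rw [if_neg]
    simpa [act] using hi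

lemma ML_hp_zero (a : (∀ i, B i) → K) : ML K (act s 0) (hp a 0) := by
  have h1 : act s 0 = {Fin.last s} := by ext i; simp [act]
  have h2 : hp a 0 = fun v => lin0 a (v (Fin.last s)) := funext (hp_zero a)
  rw [h1, h2]
  exact (ML.coord (K := K) (V := fun i => B i → K) (Fin.last s)).comp (lin0 a)

lemma lin0_deg (a : (∀ i, B i) → K) (z : B (Fin.last s) → K) :
    (lin0 a z).totalDegree ≤ s + 1 := by
  rw [lin0_apply]
  apply totalDegree_finsetSum_le
  intro j _
  refine (totalDegree_smul_le _ _).trans ((totalDegree_mul _ _).trans ?_)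
  rw [totalDegree_C, zero_add]
  refine (totalDegree_finsetProd _ _).trans ?_
  simp

lemma lin0_eval (a : (∀ i, B i) → K) (z : B (Fin.last s) → K) (x : Sigma B → K) :
    eval x (lin0 a z) = Tf a (Function.update (fun i b => x ⟨i, b⟩) (Fin.last s) z) := by
  rw [lin0_apply, Tf, map_sum]
  refine Finset.sum_congr rfl (fun j _ => ?_)
  rw [← Finset.mul_prod_erase _ _ (Finset.mem_univ (Fin.last s)), Function.update_self, smul_eval,
    map_mul, eval_C, map_prod]
  rw [Finset.prod_congr rfl (g := fun i => Function.update (fun i b => x ⟨i, b⟩) (Fin.last s) z i (j i))]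
  · ring
  · intro i hi
    rw [eval_X, Function.update_of_ne (Finset.ne_of_mem_erase hi)]

lemma deriv_prod_zero {σ ι : Type} (D : Derivation K (MvPolynomial σ K) (MvPolynomial σ K))
    (t : Finset ι) (f : ι → MvPolynomial σ K) (h : ∀ i ∈ t, D (f i) = 0) : D (∏ i ∈ t, f i) = 0 := by
  classical
  induction t using Finset.induction_on with
  | empty => simp
  | insert j u hj ih =>
    rw [Finset.prod_insert hj, Derivation.leibniz, h j (Finset.mem_insert_self _ _),
      ih (fun i hi => h i (Finset.mem_insert_of_mem hi))]
    simp

lemma pd_hp (a : (∀ i, B i) → K) (t : ℕ) (ht : t < s) (v : ∀ i, B i → K) :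
    pd (emb t v) (hp a t v) = hp a (t + 1) v := by
  rw [hp, hp, map_sum]
  refine Finset.sum_congr rfl (fun j _ => ?_)
  have hna := notMem_act ht
  set t' : Fin (s + 1) := ⟨t, by omega⟩ with ht'
  have hact : act s (t + 1) = insert t' (act s t) := act_succ t'
  rw [← Finset.mul_prod_erase _ _ (Finset.mem_univ t'), if_neg hna,
    ← Finset.mul_prod_erase Finset.univ (fun i => if i ∈ act s (t + 1) then C (v i (j i)) else (X ⟨i, j i⟩ : MvPolynomial (Sigma B) K))
      (Finset.mem_univ t'), if_pos (by rw [hact]; simp)]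
  have hz : pd (emb t v) (∏ i ∈ Finset.univ.erase t',
      (if i ∈ act s t then C (v i (j i)) else X ⟨i, j i⟩ : MvPolynomial (Sigma B) K)) = 0 := by
    apply deriv_prod_zero
    intro i hi
    split_ifs
    · exact derivation_C _ _
    · have : i.val ≠ t := fun h => Finset.ne_of_mem_erase hi (Fin.ext h)
      simp [pd, mkDerivation_X, emb, this]
  have hX : pd (emb t v) (X ⟨t', j t'⟩ : MvPolynomial (Sigma B) K) = C (v t' (j t')) := by
    simp [pd, mkDerivation_X, emb, ht']
  rw [Derivation.leibniz, derivation_C, Derivation.leibniz, hz, hX]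
  simp only [smul_eq_mul, mul_zero, add_zero, zero_add]
  rw [mul_comm (C (v t' (j t')))]
  congr 2
  refine Finset.prod_congr rfl (fun i hi => ?_)
  have : i ≠ t' := Finset.ne_of_mem_erase hi
  simp [hact, this]

lemma dd_hp (a : (∀ i, B i) → K) (m : ℕ) : ∀ (t : ℕ) (_ : t + m = s) (v : ∀ i, B i → K),
    dd t m v (hp a t v) = C (Tf a v) := by
  induction m with
  | zero =>
    intro t ht v
    have : t = s := by simpa using ht
    subst this
    simp [dd, hp, Tf, act_full]
  | succ m ih =>
    intro t ht v
    rw [dd, pd_hp a t (by omega) v]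
    exact ih (t + 1) (by omega) v

theorem core [Fintype K] (a : (∀ i, B i) → K) (L N : ℕ)
    (X : Finset (∀ i, B i → K)) (hX0 : ∀ x ∈ X, ∀ z, Tf a (Function.update x (Fin.last s) z) = 0)
    (hX : Fintype.card K ^ Fintype.card (Sigma B) ≤ X.card * Fintype.card K ^ L)
    (hN : N = 2 ^ s * (2 * (L + 1)))
    (hQ : (8 * ((s + 1) * N ^ (s + 1) + 1)) ^ 2 ≤ Fintype.card K) :
    Dec K (s * (2 ^ s * (N + 1))) (Tf a) := by
  classical
  let eqv : (∀ i, B i → K) ≃ (Sigma B → K) := (Equiv.piCurry (fun (i : Fin (s + 1)) (_ : B i) => K)).symm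
  have hfin : Finite (LinearMap.range (lin0 a)) := by
    have : Finite (Set.range (lin0 a)) := Set.finite_range _
    exact this
  obtain ⟨l, x, hx, hl, hS, hop⟩ := iterate N s 0 (X.map eqv.toEmbedding) (LinearMap.range (lin0 a))
    hfin (s + 1) L (by
      rintro _ ⟨z, rfl⟩ x hx
      rw [Finset.mem_map] at hx
      obtain ⟨y, hy, rfl⟩ := hx
      rw [lin0_eval]
      exact hX0 y hy z) (by
      rintro _ ⟨z, rfl⟩
      exact lin0_deg a z) (by
      rw [Finset.card_map]; exact hX) hN hQ
  have d := dec_main N x l (fun S h => (hS S h).1) 0 (by omega) (hp a 0) (ML_hp_zero a)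
  set P := (l.map (fun S => eval x S.a)).prod with hP
  have hP0 : P ≠ 0 := by
    rw [hP]
    apply List.prod_ne_zero
    intro h
    obtain ⟨S, h1, h2⟩ := List.mem_map.1 h
    exact (hS S h1).2 h2
  rw [hl] at d
  refine (d.smul (-P⁻¹)).congr (fun v => ?_)
  rw [dd_hp a s 0 (by omega), eval_C, hp_zero, hop _ ⟨_, rfl⟩]
  field_simp
  ring

end

end PRAR


namespace PRAR

/-- average -/
noncomputable def avg {ι : Type} [Fintype ι] (f : ι → ℝ) : ℝ := (∑ i, f i) / Fintype.card ι

lemma avg_jensen {ι : Type} [Fintype ι] [Nonempty ι] (f : ι → ℝ) (hf : ∀ i, 0 ≤ f i) (M : ℕ) :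
    (avg f) ^ M ≤ avg (fun i => f i ^ M) := by
  have hc : (Fintype.card ι : ℝ) ≠ 0 := by simp
  have := Real.pow_arith_mean_le_arith_mean_pow Finset.univ (fun _ : ι => (Fintype.card ι : ℝ)⁻¹) f
    (fun i _ => by positivity) (by simp) (fun i _ => hf i) M
  simp only [← Finset.mul_sum] at this
  simpa [avg, div_eq_inv_mul] using this

lemma avg_mono {ι : Type} [Fintype ι] (f g : ι → ℝ) (h : ∀ i, f i ≤ g i) : avg f ≤ avg g := by
  unfold avg
  gcongr with i
  exact h i

lemma avg_nonneg {ι : Type} [Fintype ι] (f : ι → ℝ) (h : ∀ i, 0 ≤ f i) : 0 ≤ avg f :=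
  div_nonneg (Finset.sum_nonneg fun i _ => h i) (by positivity)

lemma avg_comm {ι κ : Type} [Fintype ι] [Fintype κ] (f : ι → κ → ℝ) :
    avg (fun i => avg (f i)) = avg (fun j => avg (fun i => f i j)) := by
  unfold avg
  simp only [← Finset.sum_div]
  rw [Finset.sum_comm, div_right_comm]

lemma avg_cons {n : ℕ} {X : Fin (n + 1) → Type} [∀ i, Fintype (X i)] (f : (∀ i, X i) → ℝ) :
    avg f = avg (fun a : X 0 => avg (fun y : ∀ i : Fin n, X i.succ =>
      f (Fin.cons (α := X) a y))) := by
  unfold avg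
  rw [← (Fin.consEquiv X).sum_comp, Fintype.sum_prod_type, ← Finset.sum_div, div_div,
    ← Fintype.card_congr (Fin.consEquiv X), Fintype.card_prod]
  congr 1
  push_cast
  ring

lemma avg_pow {X : Type} [Fintype X] (f : X → ℝ) (m : ℕ) :
    avg (fun a : Fin m → X => ∏ j, f (a j)) = (avg f) ^ m := by
  unfold avg
  rw [div_pow, Fintype.sum_pow]
  simp

lemma density {n : ℕ} (m : ℕ) : ∀ (X : Fin n → Type) [∀ i, Fintype (X i)] [∀ i, Nonempty (X i)]
    (f : (∀ i, X i) → ℝ) (_ : ∀ x, 0 ≤ f x),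
    (avg f) ^ (m ^ n) ≤ avg (fun x : ∀ i, Fin m → X i => ∏ J : Fin n → Fin m,
      f (fun i => x i (J i))) := by
  induction n with
  | zero =>
    intro X _ _ f hf
    apply le_of_eq
    simp only [avg, pow_zero, pow_one, Finset.univ_unique, Finset.sum_singleton, Finset.prod_singleton]
    simp
    congr 1
    exact Subsingleton.elim _ _
  | succ n ih =>
    intro X _ _ f hf
    rw [avg_cons (fun x : ∀ i, Fin m → X i => ∏ J : Fin (n + 1) → Fin m, f (fun i => x i (J i)))]
    set g : (Fin m → X 0) → (∀ i : Fin n, X i.succ) → ℝ := fun a y => ∏ j, f (Fin.cons (α := X) (a j) y)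
      with hg
    have hgn : ∀ a y, 0 ≤ g a y := fun a y => Finset.prod_nonneg (fun j _ => hf _)
    have e1 : ∀ (a : Fin m → X 0) (y : ∀ i : Fin n, Fin m → X i.succ),
        ∏ J : Fin (n + 1) → Fin m, f (fun i => (Fin.cons (α := fun i => Fin m → X i) a y) i (J i)) =
        ∏ J : Fin n → Fin m, g a (fun i => y i (J i)) := by
      intro a y
      rw [← (Fin.consEquiv (fun _ : Fin (n + 1) => Fin m)).prod_comp, Fintype.prod_prod_type, Finset.prod_comm]
      refine Finset.prod_congr rfl (fun J _ => Finset.prod_congr rfl (fun j _ => ?_))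
      congr 1
      funext i
      refine Fin.cases ?_ (fun i => ?_) i <;> simp [Fin.consEquiv]
    simp only [e1]
    calc (avg f) ^ (m ^ (n + 1)) = ((avg f) ^ m) ^ (m ^ n) := by rw [← pow_mul, pow_succ, mul_comm]
      _ = ((avg (fun y => avg (fun a => f (Fin.cons (α := X) a y)))) ^ m) ^ (m ^ n) := by
        rw [avg_cons f, avg_comm]
      _ ≤ (avg (fun y => (avg (fun a => f (Fin.cons (α := X) a y))) ^ m)) ^ (m ^ n) := by
        apply pow_le_pow_left₀
        · exact pow_nonneg (avg_nonneg _ fun y => avg_nonneg _ fun a => hf _) _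
        · exact avg_jensen _ (fun y => avg_nonneg _ fun a => hf _) m
      _ = (avg (fun y => avg (fun a => g a y))) ^ (m ^ n) := by
        congr 2
        funext y
        rw [← avg_pow]
      _ = (avg (fun a => avg (g a))) ^ (m ^ n) := by rw [avg_comm]
      _ ≤ avg (fun a => (avg (g a)) ^ (m ^ n)) := avg_jensen _ (fun a => avg_nonneg _ (hgn a)) _
      _ ≤ _ := avg_mono _ _ (fun a => ih (fun i => X i.succ) (g a) (hgn a))

lemma density_card {n : ℕ} (m : ℕ) (X : Fin n → Type) [∀ i, Fintype (X i)] [∀ i, Nonempty (X i)]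
    (S : Finset (∀ i, X i)) (Y : Finset (∀ i, Fin m → X i))
    (hY : ∀ x, (∀ J : Fin n → Fin m, (fun i => x i (J i)) ∈ S) → x ∈ Y) :
    ((S.card : ℝ) / Fintype.card (∀ i, X i)) ^ (m ^ n) ≤
      (Y.card : ℝ) / Fintype.card (∀ i, Fin m → X i) := by
  classical
  have h := density m X (fun x => if x ∈ S then 1 else 0) (fun x => by split_ifs <;> norm_num)
  have h1 : avg (fun x : ∀ i, X i => if x ∈ S then (1 : ℝ) else 0) =
      (S.card : ℝ) / Fintype.card (∀ i, X i) := by simp [avg]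
  have h2 : (Y.card : ℝ) / Fintype.card (∀ i, Fin m → X i) =
     avg (fun x : ∀ i, Fin m → X i => if x ∈ Y then (1 : ℝ) else 0) := by simp [avg]
  rw [h1] at h
  rw [h2]
  refine h.trans (avg_mono _ _ (fun x => ?_))
  by_cases hx : ∀ J : Fin n → Fin m, (fun i => x i (J i)) ∈ S
  · simp [hx, hY x hx]
  · push Not at hx
    obtain ⟨J, hJ⟩ := hx
    rw [Finset.prod_eq_zero (Finset.mem_univ J) (by simp [hJ])]
    split_ifs <;> norm_num

end PRAR


namespace PRAR

section
variable {s : ℕ} {B : Fin (s + 1) → Type} {F K : Type} [Field F] [Field K] [Algebra F K]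

/-- scalar extension of vectors -/
def up (F K : Type) [Field F] [Field K] [Algebra F K] (v : ∀ i, B i → F) : ∀ i, B i → K :=
  fun i b => algebraMap F K (v i b)

lemma up_update (v : ∀ i, B i → F) (i : Fin (s + 1)) (a : B i → F) :
    up F K (Function.update v i a) = Function.update (up F K v) i (fun b => algebraMap F K (a b)) := by
  funext j b
  by_cases h : j = i
  · subst h; simp [up]
  · simp [up, Function.update_of_ne h]

lemma ML.restrict {I : Finset (Fin (s + 1))} {Φ : (∀ i, B i → K) → K} (h : ML K I Φ) :
    ML F I (fun v => Φ (up F K v)) := by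
  refine ⟨fun i hi v a b => ?_, fun i hi v k a => ?_, fun i hi v a => ?_⟩
  · beta_reduce
    simp only [up_update]
    rw [← h.1 i hi]
    congr 2
    funext b; simp
  · beta_reduce
    simp only [up_update]
    rw [← algebraMap_smul K k (Φ _), ← h.2.1 i hi]
    congr 2
    funext b; simp
  · beta_reduce
    rw [up_update, h.2.2 i hi]

variable [∀ i, Fintype (B i)]

lemma Tf_up (a : (∀ i, B i) → F) (v : ∀ i, B i → F) :
    Tf (fun j => algebraMap F K (a j)) (up F K v) = algebraMap F K (Tf a v) := by
  simp [Tf, up]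

lemma descend {m r : ℕ} (ω : Module.Basis (Fin m) F K) (a : (∀ i, B i) → F)
    (h : Dec K r (Tf (fun j => algebraMap F K (a j)))) : Dec F (r * m) (Tf a) := by
  obtain ⟨τ, i, I, β, γ, h1, h2, h3⟩ := h
  obtain ⟨π, hπ⟩ := LinearMap.exists_leftInverse_of_injective (Algebra.linearMap F K)
    (LinearMap.ker_eq_bot.2 (algebraMap F K).injective)
  have hπ' : ∀ c, π (algebraMap F K c) = c := fun c => LinearMap.congr_fun hπ c
  refine ⟨τ × Fin m, inferInstance, fun p => I p.1, fun p v => ω.coord p.2 (β p.1 (up F K v)),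
    fun p v => π (ω p.2 * γ p.1 (up F K v)), ?_, ?_, ?_⟩
  · rw [Fintype.card_prod, Fintype.card_fin]
    exact Nat.mul_le_mul_right _ h1
  · intro p
    obtain ⟨a1, a2, a3, a4⟩ := h2 p.1
    exact ⟨a1, a2, a3.restrict.comp (ω.coord p.2),
      a4.restrict.comp (π ∘ₗ LinearMap.mulLeft F (ω p.2))⟩
  · intro v
    rw [← hπ' (Tf a v), ← Tf_up, h3, map_sum, Fintype.sum_prod_type]
    refine Finset.sum_congr rfl (fun t _ => ?_)
    conv_lhs => rw [← ω.sum_repr (β t (up F K v)), Finset.sum_mul, map_sum]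
    refine Finset.sum_congr rfl (fun j _ => ?_)
    rw [smul_mul_assoc, map_smul, smul_eq_mul]; rfl

/-- combine coordinates -/
noncomputable def comb {m : ℕ} (ω : Module.Basis (Fin m) F K) (x : ∀ i, Fin m → B i → F) :
    ∀ i, B i → K := fun i b => ∑ j, x i j b • ω j

lemma comb_inj {m : ℕ} (ω : Module.Basis (Fin m) F K) :
    Function.Injective (comb (B := B) ω) := by
  intro x y h
  funext i j b
  have h1 := congrFun (congrFun h i) b
  simp only [comb] at h1
  have h2 := congrArg (fun z => (ω.repr z : Fin m → F)) h1
  simp only [Module.Basis.repr_sum_self] at h2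
  exact congrFun h2 j

lemma Tf_comb {m : ℕ} (ω : Module.Basis (Fin m) F K) (a : (∀ i, B i) → F)
    (x : ∀ i, Fin m → B i → F) : Tf (fun j => algebraMap F K (a j)) (comb ω x) =
      ∑ J : Fin (s + 1) → Fin m, Tf a (fun i => x i (J i)) • ∏ i, ω (J i) := by
  simp only [Tf, comb, Finset.sum_smul]
  rw [Finset.sum_comm]
  refine Finset.sum_congr rfl (fun j _ => ?_)
  rw [Finset.prod_univ_sum, Fintype.piFinset_univ, Finset.mul_sum]
  refine Finset.sum_congr rfl (fun J _ => ?_)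
  rw [Finset.prod_smul, Algebra.smul_def, Algebra.smul_def, map_mul, mul_assoc]

theorem via_ext [Fintype F] [Fintype K] {m : ℕ} (ω : Module.Basis (Fin m) F K)
    (a : (∀ i, B i) → F) (l L N : ℕ)
    (S : Finset (∀ i, B i → F))
    (hS0 : ∀ x, x ∈ S ↔ ∀ z, Tf a (Function.update x (Fin.last s) z) = 0)
    (hS : Fintype.card F ^ Fintype.card (Sigma B) ≤ S.card * Fintype.card F ^ l)
    (hL : L = l * m ^ s)
    (hN : N = 2 ^ s * (2 * (L + 1)))
    (hQ : (8 * ((s + 1) * N ^ (s + 1) + 1)) ^ 2 ≤ Fintype.card F ^ m) :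
    Dec F (s * (2 ^ s * (N + 1)) * m) (Tf a) := by
  classical
  apply descend ω
  have hK : Fintype.card K = Fintype.card F ^ m := by
    rw [Module.card_fintype ω, Fintype.card_fin]
  let Y : Finset (∀ i, Fin m → B i → F) := Finset.univ.filter fun x =>
    ∀ J : Fin (s + 1) → Fin m, (fun i => x i (J i)) ∈ S
  have hd := density_card m (fun i => B i → F) S Y (fun x hx => by simpa [Y] using hx)
  have hc : Fintype.card (∀ i, B i → F) = Fintype.card F ^ Fintype.card (Sigma B) := by
    rw [← Fintype.card_fun, Fintype.card_congr (Equiv.piCurry (fun (i : Fin (s + 1)) (_ : B i) => F))]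
  have hc2 : Fintype.card (∀ i, Fin m → B i → F) = Fintype.card K ^ Fintype.card (Sigma B) := by
    rw [Fintype.card_pi, hK, ← pow_mul, mul_comm, pow_mul, ← hc, Fintype.card_pi, ← Finset.prod_pow]
    simp
  have hq : 0 < Fintype.card F := Fintype.card_pos
  refine core _ L N (Y.map ⟨comb ω, comb_inj ω⟩) ?_ ?_ hN (by rw [hK]; exact hQ)
  · intro x hx z
    rw [Finset.mem_map] at hx
    obtain ⟨y, hy, rfl⟩ := hx
    have hz : Function.update (comb ω y) (Fin.last s) z =
        comb ω (Function.update y (Fin.last s) (fun j b => ω.repr (z b) j)) := by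
      funext i b
      by_cases h : i = Fin.last s
      · subst h
        simp only [comb, Function.update_self]
        exact (ω.sum_repr (z b)).symm
      · simp only [comb, Function.update_of_ne h]
    change Tf _ (Function.update (comb ω y) (Fin.last s) z) = 0
    rw [hz, Tf_comb]
    apply Finset.sum_eq_zero
    intro J _
    have h1 := (hS0 _).1 ((Finset.mem_filter.1 hy).2 J) (fun b => ω.repr (z b) (J (Fin.last s)))
    have h2 : (fun i => Function.update y (Fin.last s) (fun j b => ω.repr (z b) j) i (J i)) =
       Function.update (fun i => y i (J i)) (Fin.last s) (fun b => ω.repr (z b) (J (Fin.last s))) := by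
      funext i
      by_cases h : i = Fin.last s
      · subst h
        simp only [Function.update_self]
      · simp only [Function.update_of_ne h]
    rw [h2, h1, zero_smul]
  · rw [Finset.card_map, ← hc2]
    rw [← hc] at hS
    have hSr : (Fintype.card (∀ i, B i → F) : ℝ) ≤ S.card * (Fintype.card F : ℝ) ^ l := by
      exact_mod_cast hS
    have p1 : (0 : ℝ) < Fintype.card (∀ i, B i → F) := by exact_mod_cast Fintype.card_pos
    have p2 : (0 : ℝ) < Fintype.card (∀ i, Fin m → B i → F) := by exact_mod_cast Fintype.card_pos
    have hqr : (0 : ℝ) < Fintype.card F := by exact_mod_cast hq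
    have k1 : ((Fintype.card F : ℝ) ^ l)⁻¹ ≤ (S.card : ℝ) / Fintype.card (∀ i, B i → F) := by
      rw [inv_eq_one_div, div_le_div_iff₀ (by positivity) p1]
      linarith
    have k2 := (pow_le_pow_left₀ (by positivity) k1 (m ^ (s + 1))).trans hd
    rw [inv_pow, ← pow_mul, inv_eq_one_div, div_le_div_iff₀ (by positivity) p2, one_mul] at k2
    have k3 : Fintype.card K ^ L = Fintype.card F ^ (l * m ^ (s + 1)) := by
      rw [hK, hL, ← pow_mul]; congr 1; ring
    rw [k3]
    exact_mod_cast k2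

end

end PRAR


namespace PRAR

lemma exists_ext (F : Type) [Field F] [Fintype F] (m : ℕ) (hm : 0 < m) :
    ∃ (K : Type) (_ : Field K) (_ : Fintype K) (_ : Algebra F K),
      Nonempty (Module.Basis (Fin m) F K) := by
  obtain ⟨p, hp⟩ := CharP.exists F
  have : Fact p.Prime := ⟨CharP.char_is_prime F p⟩
  have : NeZero m := ⟨by omega⟩
  have : Finite (FiniteField.Extension F p m) := Module.finite_of_finite F
  exact ⟨FiniteField.Extension F p m, inferInstance, Fintype.ofFinite _, inferInstance,
    ⟨Module.finBasisOfFinrankEq F _ (FiniteField.finrank_extension F p m)⟩⟩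

lemma poly_le_exp (e A : ℕ) : ∃ M : ℕ, 0 < M ∧ ∀ m ≥ M, A * m ^ e ≤ 2 ^ m := by
  have h := tendsto_pow_const_div_const_pow_of_one_lt (r := (2 : ℝ)) e (by norm_num)
  have hpos : (0 : ℝ) < 1 / (A + 1) := by positivity
  obtain ⟨M, hM⟩ := Filter.eventually_atTop.1 (h.eventually (gt_mem_nhds hpos))
  refine ⟨M + 1, by omega, fun m hm => ?_⟩
  have h1 := hM m (by omega)
  rw [div_lt_div_iff₀ (by positivity) (by positivity), one_mul] at h1
  have h2 : (A : ℝ) * (m : ℝ) ^ e ≤ 2 ^ m := by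
    have : (0 : ℝ) ≤ (m : ℝ) ^ e := by positivity
    nlinarith
  exact_mod_cast h2

lemma consts (s : ℕ) : ∃ c : ℕ, 0 < c ∧ ∀ l : ℕ, 0 < l → ∀ m L N : ℕ, m = c * l → L = l * m ^ s →
    N = 2 ^ s * (2 * (L + 1)) →
    (8 * ((s + 1) * N ^ (s + 1) + 1)) ^ 2 ≤ 2 ^ m ∧ N + 1 ≤ 2 ^ (s + 3) * m ^ (s + 1) := by
  obtain ⟨M, hM, h⟩ := poly_le_exp (2 * ((s + 1) * (s + 1)))
    ((8 * (s + 2) * (2 ^ (s + 2)) ^ (s + 1)) ^ 2)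
  refine ⟨M, hM, fun l hl m L N hm hL hN => ?_⟩
  have hmM : M ≤ m := by rw [hm]; nlinarith
  have hlm : l ≤ m := by rw [hm]; nlinarith
  have hm0 : 0 < m := by omega
  have hL' : L ≤ m ^ (s + 1) := by
    rw [hL, pow_succ, mul_comm]; gcongr
  have h1 : 1 ≤ m ^ (s + 1) := Nat.one_le_pow _ _ hm0
  have hN' : N ≤ 2 ^ (s + 2) * m ^ (s + 1) := by
    calc N ≤ 2 ^ s * (2 * (m ^ (s + 1) + m ^ (s + 1))) := by rw [hN]; gcongr
      _ = _ := by ring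
  constructor
  · refine le_trans ?_ (h m hmM)
    have e1 : N ^ (s + 1) ≤ (2 ^ (s + 2)) ^ (s + 1) * m ^ ((s + 1) * (s + 1)) := by
      calc N ^ (s + 1) ≤ (2 ^ (s + 2) * m ^ (s + 1)) ^ (s + 1) := by gcongr
        _ = _ := by rw [mul_pow, ← pow_mul m]
    set Z := (2 ^ (s + 2)) ^ (s + 1) * m ^ ((s + 1) * (s + 1)) with hZ
    have hZ1 : 1 ≤ Z := by rw [hZ]; exact Nat.succ_le_of_lt (by positivity)
    calc (8 * ((s + 1) * N ^ (s + 1) + 1)) ^ 2 ≤ (8 * ((s + 1) * Z + Z)) ^ 2 := by gcongr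
      _ = ((8 * (s + 2) * (2 ^ (s + 2)) ^ (s + 1)) * m ^ ((s + 1) * (s + 1))) ^ 2 := by
        rw [hZ]; ring
      _ = _ := by rw [mul_pow _ (m ^ _), ← pow_mul m, mul_comm 2]
  · have : 1 ≤ 2 ^ (s + 2) * m ^ (s + 1) := Nat.succ_le_of_lt (by positivity)
    calc N + 1 ≤ 2 ^ (s + 2) * m ^ (s + 1) + 2 ^ (s + 2) * m ^ (s + 1) := by omega
      _ = _ := by ring

lemma ML.indep {K : Type} [Field K] {n : ℕ} {V : Fin n → Type} [∀ i, AddCommGroup (V i)]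
    [∀ i, Module K (V i)] {M : Type} [AddCommGroup M] [Module K M] {I : Finset (Fin n)}
    {Φ : (∀ i, V i) → M} (h : ML K I Φ) (v w : ∀ i, V i) (hvw : ∀ i ∈ I, v i = w i) :
    Φ v = Φ w := by
  have key : ∀ T : Finset (Fin n), Φ (fun i => if i ∈ T then w i else v i) = Φ v := by
    intro T
    induction T using Finset.induction_on with
    | empty => simp
    | insert j T hj ih =>
      rw [← ih]
      have e : (fun i => if i ∈ insert j T then w i else v i) =
          Function.update (fun i => if i ∈ T then w i else v i) j (w j) := by
        funext i
        by_cases hij : i = j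
        · subst hij; simp
        · simp [hij]
      by_cases hjI : j ∈ I
      · congr 1
        rw [e]
        apply Function.update_eq_self_iff.2
        simp [hj, hvw j hjI]
      · rw [e, h.2.2 j hjI]
  have := key Finset.univ
  simpa using this.symm

lemma ML.exists_mlm {K : Type} [Field K] {n : ℕ} {V : Fin n → Type} [∀ i, AddCommGroup (V i)]
    [∀ i, Module K (V i)] {I : Finset (Fin n)} {Φ : (∀ i, V i) → K} (h : ML K I Φ) :
    ∃ β : MultilinearMap K (fun j : ↥I => V j.1) K, ∀ x : ∀ i, V i, β (fun j => x j.1) = Φ x := by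
  classical
  let ext : (∀ j : ↥I, V j.1) → ∀ i, V i := fun y i => if hi : i ∈ I then y ⟨i, hi⟩ else 0
  have hext : ∀ (y : ∀ j : ↥I, V j.1) (j : ↥I) (a : V j.1), ext (Function.update y j a) =
      Function.update (ext y) j.1 a := by
    intro y j a
    funext i
    by_cases hij : i = j.1
    · subst hij
      simp [ext]
    · by_cases hi : i ∈ I
      · have : (⟨i, hi⟩ : ↥I) ≠ j := fun h' => hij (congrArg Subtype.val h')
        simp [ext, hi, hij, Function.update_of_ne this]
      · simp [ext, hi, hij]
  refine ⟨{ toFun := fun y => Φ (ext y), map_update_add' := ?_, map_update_smul' := ?_ }, ?_⟩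
  · intro inst y j a b
    obtain rfl : inst = fun a b => Classical.propDecidable (a = b) := Subsingleton.elim _ _
    convert h.1 j.1 j.2 (ext y) a b using 2 <;> (rw [← hext]; congr!)
  · intro inst y j k a
    obtain rfl : inst = fun a b => Classical.propDecidable (a = b) := Subsingleton.elim _ _
    convert h.2.1 j.1 j.2 (ext y) k a using 2 <;> (rw [← hext]; congr!)
  · intro x
    apply h.indep
    intro i hi
    simp [ext, hi]

end PRAR


namespace PRAR

section
variable {s : ℕ} {F : Type} [Field F] [Fintype F]
  {G : Fin (s + 1) → Type} [∀ i, AddCommGroup (G i)] [∀ i, Module F (G i)]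
  [∀ i, Fintype (G i)]

lemma sum_update (f : (∀ i, G i) → ℂ) (t : Fin (s + 1)) :
    ∑ x : ∀ i, G i, ∑ z : G t, f (Function.update x t z) = Fintype.card (G t) * ∑ x, f x := by
  rw [← Fintype.sum_prod_type' (f := fun (x : ∀ i, G i) (z : G t) => f (Function.update x t z))]
  let e : (∀ i, G i) × G t ≃ (∀ i, G i) × G t :=
    { toFun := fun p => (Function.update p.1 t p.2, p.1 t)
      invFun := fun p => (Function.update p.1 t p.2, p.1 t)
      left_inv := fun p => by simp
      right_inv := fun p => by simp }
  refine (Equiv.sum_comp e (fun p => f p.1)).trans ?_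
  rw [Fintype.sum_prod_type]
  simp [Finset.mul_sum]

open Classical in
lemma bias_eq (χ : AddChar F ℂ) (hχ : χ ≠ 1) (α : MultilinearMap F G F) :
    ∑ x : ∀ i, G i, χ (α x) = ((Finset.univ.filter fun x : ∀ i, G i =>
      ∀ z, α (Function.update x (Fin.last s) z) = 0).card : ℂ) := by
  have hG : (Fintype.card (G (Fin.last s)) : ℂ) ≠ 0 := by
    simp
  apply mul_left_cancel₀ hG
  rw [← sum_update (fun x => χ (α x)) (Fin.last s), Finset.card_filter]
  push_cast
  rw [Finset.mul_sum]
  refine Finset.sum_congr rfl (fun x _ => ?_)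
  let φ : G (Fin.last s) →ₗ[F] F := α.toLinearMap x (Fin.last s)
  have hφ : ∀ z, φ z = α (Function.update x (Fin.last s) z) := fun z => rfl
  have h := AddChar.sum_eq_ite (χ.compAddMonoidHom φ.toAddMonoidHom)
  have e1 : ∑ z, χ (α (Function.update x (Fin.last s) z)) =
      ∑ z, (χ.compAddMonoidHom φ.toAddMonoidHom) z := rfl
  rw [e1, h]
  by_cases h0 : ∀ z, α (Function.update x (Fin.last s) z) = 0
  · rw [if_pos h0, if_pos]
    · simp
    · ext z
      change χ (φ z) = 1
      rw [hφ, h0, AddChar.map_zero_eq_one]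
  · rw [if_neg h0, if_neg]
    · simp
    · intro hc
      push Not at h0
      obtain ⟨z, hz⟩ := h0
      apply hχ
      ext k
      have := DFunLike.congr_fun hc ((k * (φ z)⁻¹) • z)
      change χ (φ ((k * (φ z)⁻¹) • z)) = 1 at this
      rw [map_smul, smul_eq_mul, mul_assoc, inv_mul_cancel₀ (by rw [hφ]; exact hz), mul_one] at this
      rw [this]; rfl

lemma form_eq (α : MultilinearMap F G F) {B : Fin (s + 1) → Type} [∀ i, Fintype (B i)]
    (b : ∀ i, Module.Basis (B i) F (G i)) (x : ∀ i, G i) :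
    α x = Tf (fun j => α (fun i => b i (j i))) (fun i => (b i).equivFun (x i)) := by
  classical
  have hx : x = fun i => ∑ j, (b i).equivFun (x i) j • b i j := by
    funext i
    exact ((b i).sum_equivFun (x i)).symm
  conv_lhs => rw [hx]
  rw [MultilinearMap.map_sum, Tf]
  refine Finset.sum_congr rfl (fun j _ => ?_)
  rw [MultilinearMap.map_smul_univ, smul_eq_mul, mul_comm]

lemma ML.precomp {V : Fin (s + 1) → Type} [∀ i, AddCommGroup (V i)] [∀ i, Module F (V i)]
    (e : ∀ i, G i ≃ₗ[F] V i) {I : Finset (Fin (s + 1))} {Φ : (∀ i, V i) → F} (h : ML F I Φ) :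
    ML F I (fun x : ∀ i, G i => Φ (fun i => e i (x i))) := by
  have hu : ∀ (x : ∀ i, G i) (i : Fin (s + 1)) (a : G i), (fun j => e j (Function.update x i a j)) =
      Function.update (fun j => e j (x j)) i (e i a) := by
    intro x i a
    funext j
    by_cases hj : j = i
    · subst hj; simp
    · simp [Function.update_of_ne hj]
  refine ⟨fun i hi v a b => ?_, fun i hi v k a => ?_, fun i hi v a => ?_⟩
  · simp only [hu, map_add]
    exact h.1 i hi _ _ _
  · simp only [hu, map_smul]
    exact h.2.1 i hi _ _ _
  · simp only [hu]
    exact h.2.2 i hi _ _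

/-- main statement in terms of the density of the zero set -/
theorem main_dec (s : ℕ) : ∃ A : ℕ, ∀ (F : Type) [Field F] [Fintype F]
    (G : Fin (s + 1) → Type) [∀ i, AddCommGroup (G i)] [∀ i, Module F (G i)]
    [∀ i, Fintype (G i)] [∀ i, FiniteDimensional F (G i)] (α : MultilinearMap F G F)
    (S : Finset (∀ i, G i)) (_ : ∀ x, x ∈ S ↔ ∀ z, α (Function.update x (Fin.last s) z) = 0)
    (l : ℕ) (_ : 0 < l)
    (_ : Fintype.card (∀ i, G i) ≤ S.card * Fintype.card F ^ l),
    Dec F (A * l ^ (s + 2)) (fun x => α x) := by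
  obtain ⟨c, hc, hcon⟩ := consts s
  refine ⟨s * 2 ^ (2 * s + 3) * c ^ (s + 2), ?_⟩
  intro F _ _ G _ _ _ _ α S hS l hl hcard
  classical
  let B : Fin (s + 1) → Type := fun i => Fin (Module.finrank F (G i))
  let b : ∀ i, Module.Basis (B i) F (G i) := fun i => Module.finBasis F (G i)
  let a : (∀ i, B i) → F := fun j => α (fun i => b i (j i))
  have hform : ∀ x, α x = Tf a (fun i => (b i).equivFun (x i)) := form_eq α b
  let e : (∀ i, G i) ≃ (∀ i, B i → F) := Equiv.piCongrRight (fun i => (b i).equivFun.toEquiv)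
  have he : ∀ x i, e x i = (b i).equivFun (x i) := fun x i => rfl
  have hform' : ∀ x, α x = Tf a (e x) := hform
  have heu : ∀ x z, e (Function.update x (Fin.last s) z) =
      Function.update (e x) (Fin.last s) ((b (Fin.last s)).equivFun z) := by
    intro x z
    funext j
    by_cases hj : j = Fin.last s
    · subst hj; simp [he]
    · simp [he, Function.update_of_ne hj]
  obtain ⟨K, i1, i2, i3, ⟨ω⟩⟩ := exists_ext F (c * l) (by positivity)
  obtain ⟨hQ, hN⟩ := hcon l hl (c * l) _ _ rfl rfl rfl
  set m := c * l with hm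
  set N := 2 ^ s * (2 * (l * m ^ s + 1)) with hNdef
  have hd : Dec F (s * (2 ^ s * (N + 1)) * m) (Tf a) := by
    refine via_ext ω a l (l * m ^ s) N (S.map e.toEmbedding) ?_ ?_ rfl hNdef ?_
    · intro y
      obtain ⟨x, rfl⟩ := e.surjective y
      have : e x ∈ S.map e.toEmbedding ↔ x ∈ S := by simp
      rw [this, hS]
      constructor
      · intro h z
        have := h ((b (Fin.last s)).equivFun.symm z)
        rw [hform', heu] at this
        rwa [LinearEquiv.apply_symm_apply] at this
      · intro h z
        rw [hform', heu]
        exact h _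
    · rw [Finset.card_map]
      have : Fintype.card F ^ Fintype.card (Sigma B) = Fintype.card (∀ i, G i) := by
        rw [← Fintype.card_fun, Fintype.card_congr (Equiv.piCurry (fun (i : Fin (s + 1)) (_ : B i) => F))]
        exact Fintype.card_congr e.symm
      rw [this]; exact hcard
    · refine hQ.trans ?_
      gcongr
      exact Fintype.one_lt_card
  have hr : s * (2 ^ s * (N + 1)) * m ≤ s * 2 ^ (2 * s + 3) * c ^ (s + 2) * l ^ (s + 2) := by
    calc s * (2 ^ s * (N + 1)) * m ≤ s * (2 ^ s * (2 ^ (s + 3) * m ^ (s + 1))) * m := by gcongr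
      _ = s * 2 ^ (2 * s + 3) * m ^ (s + 2) := by ring
      _ = _ := by rw [hm, mul_pow]; ring
  obtain ⟨τ, it, I, β, γ, h1, h2, h3⟩ := hd.mono hr
  refine ⟨τ, it, I, fun i x => β i (fun j => (b j).equivFun (x j)),
    fun i x => γ i (fun j => (b j).equivFun (x j)), h1, ?_, ?_⟩
  · intro i
    obtain ⟨a1, a2, a3, a4⟩ := h2 i
    exact ⟨a1, a2, a3.precomp (fun j => (b j).equivFun), a4.precomp (fun j => (b j).equivFun)⟩
  · intro x
    change α x = _
    rw [hform, h3]

end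

end PRAR

theorem strong_inverse_theorem :
    ∀ k : ℕ, 0 < k → ∃ C D : ℝ, 0 < C ∧ 0 < D ∧
      ∀ (𝔽 : Type) [Field 𝔽] [Fintype 𝔽]
        (G : Fin k → Type) [∀ i, AddCommGroup (G i)] [∀ i, Module 𝔽 (G i)]
        [∀ i, Fintype (G i)] [∀ i, FiniteDimensional 𝔽 (G i)]
        (χ : AddChar 𝔽 ℂ), χ ≠ 1 →
      ∀ (α : MultilinearMap 𝔽 G 𝔽) (c : ℝ), 0 < c →
      c ≤ (((∑ x : ∀ i, G i, χ (α x)) / (Fintype.card (∀ i, G i) : ℂ)).re) →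
      ∃ r : ℕ,
        (r : ℝ) ≤ C * (Real.logb (Fintype.card 𝔽) ((Fintype.card 𝔽 : ℝ) * c⁻¹)) ^ D ∧
        ∃ (I : Fin r → Finset (Fin k))
          (β : ∀ i, MultilinearMap 𝔽 (fun j : ↥(I i) => G j.1) 𝔽)
          (γ : ∀ i, MultilinearMap 𝔽 (fun j : ↥((I i)ᶜ) => G j.1) 𝔽),
          (∀ i, (I i).Nonempty ∧ ∀ j ∈ I i, (j : ℕ) + 1 < k) ∧
          ∀ x : ∀ i, G i, α x = ∑ i, β i (fun j => x j.1) * γ i (fun j => x j.1) := by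
  classical
  intro k hk
  obtain ⟨s, rfl⟩ : ∃ s, k = s + 1 := ⟨k - 1, by omega⟩
  obtain ⟨A, hA⟩ := PRAR.main_dec s
  refine ⟨(A + 1 : ℝ) * 2 ^ (s + 2), ((s + 2 : ℕ) : ℝ), by positivity, by positivity, ?_⟩
  intro F _ _ G _ _ _ _ χ hχ α c hc hbias
  let S : Finset (∀ i, G i) := Finset.univ.filter fun x : ∀ i, G i =>
      ∀ z, α (Function.update x (Fin.last s) z) = 0
  have hS : ∀ x, x ∈ S ↔ ∀ z, α (Function.update x (Fin.last s) z) = 0 := by simp [S]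
  have hre : c ≤ (S.card : ℝ) / Fintype.card (∀ i, G i) := by
    have e : (∑ x : ∀ i, G i, χ (α x)) / (Fintype.card (∀ i, G i) : ℂ) =
        (((S.card : ℝ) / Fintype.card (∀ i, G i) : ℝ) : ℂ) := by
      rw [PRAR.bias_eq χ hχ α]
      push_cast
      rfl
    rw [e, Complex.ofReal_re] at hbias
    exact hbias
  have hGpos : (0 : ℝ) < Fintype.card (∀ i, G i) := by exact_mod_cast Fintype.card_pos
  have hc1 : c ≤ 1 := by
    refine hre.trans ?_
    rw [div_le_one hGpos]
    exact_mod_cast Finset.card_le_univ S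
  have hq : (1 : ℝ) < Fintype.card F := by exact_mod_cast (Fintype.one_lt_card : 1 < Fintype.card F)
  obtain ⟨q, hqdef⟩ : ∃ q : ℝ, q = (Fintype.card F : ℝ) := ⟨_, rfl⟩
  rw [← hqdef] at hq ⊢
  set lg := Real.logb q (q * c⁻¹) with hlg
  have hcinv : 1 ≤ c⁻¹ := (one_le_inv₀ hc).2 hc1
  have hlg1 : 1 ≤ lg := by
    rw [hlg, Real.le_logb_iff_rpow_le hq (by positivity), Real.rpow_one]
    nlinarith
  set l := ⌈lg⌉₊ with hl
  have hl0 : 0 < l := Nat.ceil_pos.2 (by linarith)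
  have hl1 : lg ≤ l := Nat.le_ceil lg
  have hl2 : (l : ℝ) ≤ 2 * lg := by
    have := Nat.ceil_lt_add_one (a := lg) (by linarith)
    linarith
  have hql : c⁻¹ ≤ q ^ l := by
    have h1 : q * c⁻¹ ≤ q ^ (l : ℝ) := (Real.logb_le_iff_le_rpow hq (by positivity)).1 hl1
    rw [Real.rpow_natCast] at h1
    nlinarith
  have hcard : Fintype.card (∀ i, G i) ≤ S.card * Fintype.card F ^ l := by
    have h1 : c * Fintype.card (∀ i, G i) ≤ S.card := by
      rwa [le_div_iff₀ hGpos] at hre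
    have h2 : (Fintype.card (∀ i, G i) : ℝ) ≤ S.card * q ^ l := by
      calc (Fintype.card (∀ i, G i) : ℝ) = (c * Fintype.card (∀ i, G i)) * c⁻¹ := by
            field_simp
        _ ≤ S.card * q ^ l := by gcongr
    rw [hqdef] at h2
    exact_mod_cast h2
  obtain ⟨τ, it, I, β, γ, h1, h2, h3⟩ := hA F G α S hS l hl0 hcard
  choose a1 a2 a3 a4 using h2
  choose β' hβ' using fun i => (a3 i).exists_mlm
  choose γ' hγ' using fun i => (a4 i).exists_mlm
  let e := Fintype.equivFin τ
  refine ⟨Fintype.card τ, ?_, fun i => I (e.symm i), fun i => β' (e.symm i),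
    fun i => γ' (e.symm i), ?_, ?_⟩
  · rw [Real.rpow_natCast]
    calc (Fintype.card τ : ℝ) ≤ ((A * l ^ (s + 2) : ℕ) : ℝ) := by exact_mod_cast h1
      _ = (A : ℝ) * (l : ℝ) ^ (s + 2) := by push_cast; ring
      _ ≤ (A + 1 : ℝ) * (2 * lg) ^ (s + 2) := by gcongr; linarith
      _ = _ := by rw [mul_pow]; ring
  · intro i
    refine ⟨a1 _, fun j hj => ?_⟩
    have hne : j ≠ Fin.last s := fun h => a2 (e.symm i) (h ▸ hj)
    have := Fin.val_lt_last hne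
    omega
  · intro x
    refine (h3 x).trans ?_
    rw [← e.symm.sum_comp]
    refine Finset.sum_congr rfl (fun i _ => ?_)
    rw [hβ', hγ']
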